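/- arXiv:1111.5366 — 2 statements merged into one kernel-verified Lean document; each statement's English description precedes it below -/
import Mathlib

section
/- (Elliptic soliton solution of Hirota's bilinear discrete KP equation.) The τ-function satisfies, at every (n,m,h) ∈ ℤ³, the bilinear three-term equation χ_{−δ,ε}(ξ+δ)·τ̄·τ̂̃ = χ_{−λ,ε}(ξ+λ)·τ̃·τ̂̄ + χ_{−δ,λ}(ξ+δ)·τ̂·τ̃̄, where χ_{α,β}(ξ) = ζ(α) + ζ(β) + ζ(ξ) − ζ(ξ+α+β), τ̃, τ̂, τ̄ denote τ evaluated at (n+1,m,h), (n,m+1,h), (n,m,h+1), and τ̂̃, τ̃̄, τ̂̄ at (n+1,m+1,h), (n+1,m,h+1), (n,m+1,h+1). (This is the precise, gauge-exact form of Hirota's DAGTE equation (2.48) of the paper; in the elliptic case the coefficients depend on ξ and do not sum to zero.) -/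
open scoped BigOperators

noncomputable section

/-- A period lattice in `ℂ` spanned by two `ℝ`-independent periods. -/
structure EllLattice where
  ω₁ : ℂ
  ω₂ : ℂ
  indep : ∀ a b : ℝ, a • ω₁ + b • ω₂ = 0 → a = 0 ∧ b = 0

namespace EllLattice

/-- Membership in the lattice `Λ = ℤω₁ + ℤω₂`. -/
def mem (L : EllLattice) (z : ℂ) : Prop := ∃ m n : ℤ, z = m • L.ω₁ + n • L.ω₂

/-- The lattice point with integer coordinates `p = (m, n)`. -/
def per (L : EllLattice) (p : ℤ × ℤ) : ℂ := p.1 • L.ω₁ + p.2 • L.ω₂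

/-- The Weierstrass sigma function associated to the lattice, defined by its
Hadamard product over the nonzero lattice points. -/
def sigma (L : EllLattice) (z : ℂ) : ℂ :=
  z * ∏' p : {p : ℤ × ℤ // p ≠ 0},
      ((1 - z / L.per p.1) *
        Complex.exp (z / L.per p.1 + z ^ 2 / (2 * (L.per p.1) ^ 2)))

/-- The Weierstrass zeta function `ζ = σ′/σ`. -/
def zeta (L : EllLattice) (z : ℂ) : ℂ := deriv L.sigma z / L.sigma z

/-- The Weierstrass `℘`-function `℘ = −ζ′`. -/
def wp (L : EllLattice) (z : ℂ) : ℂ := - deriv L.zeta z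

/-- `Φ_ξ(κ) = σ(ξ+κ)/(σ(ξ)σ(κ))`. -/
def Phi (L : EllLattice) (ξ κ : ℂ) : ℂ := L.sigma (ξ + κ) / (L.sigma ξ * L.sigma κ)

/-- The Lamé function `Ψ_ξ(κ) = Φ_ξ(κ)·e^{−ζ(ξ)κ}`. -/
def Psi (L : EllLattice) (ξ κ : ℂ) : ℂ := L.Phi ξ κ * Complex.exp (-(L.zeta ξ) * κ)

/-- `η_δ(ξ) = ζ(ξ+δ) − ζ(ξ) − ζ(δ)`. -/
def eta (L : EllLattice) (δ ξ : ℂ) : ℂ := L.zeta (ξ + δ) - L.zeta ξ - L.zeta δ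

/-- `χ_{α,β}(ξ) = ζ(α) + ζ(β) + ζ(ξ) − ζ(ξ+α+β)`. -/
def chi (L : EllLattice) (α β ξ : ℂ) : ℂ :=
  L.zeta α + L.zeta β + L.zeta ξ - L.zeta (ξ + α + β)

end EllLattice

open Matrix

/-- All the data entering the elliptic (N,N′)-soliton solutions of the lattice KP system:
a period lattice, lattice parameters `δ, ε, λ`, a base point `ξ₀`, rapidity parameters
`κ_i, κ′_j`, initial plane-wave constants `ρ⁰_i, ν⁰_j` and a constant `N′×N` matrix `C`. -/
structure KPData (N N' : ℕ) where
  L : EllLattice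
  del : ℂ
  eps : ℂ
  lam : ℂ
  xi0 : ℂ
  κ : Fin N → ℂ
  κ' : Fin N' → ℂ
  ρ0 : Fin N → ℂ
  ν0 : Fin N' → ℂ
  C : Matrix (Fin N') (Fin N) ℂ

namespace KPData

variable {N N' : ℕ}

/-- `ξ = ξ₀ + nδ + mε + hλ`. -/
def xi (D : KPData N N') (n m h : ℤ) : ℂ :=
  D.xi0 + n • D.del + m • D.eps + h • D.lam

/-- The plane-wave factor `ρ_i(n,m,h)`. -/
def ρ (D : KPData N N') (i : Fin N) (n m h : ℤ) : ℂ :=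
  (Complex.exp (-(D.L.zeta D.del) * D.κ i) * D.L.Psi D.del (-(D.κ i))) ^ n *
  (Complex.exp (-(D.L.zeta D.eps) * D.κ i) * D.L.Psi D.eps (-(D.κ i))) ^ m *
  (Complex.exp (-(D.L.zeta D.lam) * D.κ i) * D.L.Psi D.lam (-(D.κ i))) ^ h *
  Complex.exp (D.L.zeta (D.xi n m h) * D.κ i) * D.ρ0 i

/-- The plane-wave factor `ν_j(n,m,h)`. -/
def ν (D : KPData N N') (j : Fin N') (n m h : ℤ) : ℂ :=
  (Complex.exp (D.L.zeta D.del * D.κ' j) * D.L.Psi D.del (D.κ' j)) ^ (-n) *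
  (Complex.exp (D.L.zeta D.eps * D.κ' j) * D.L.Psi D.eps (D.κ' j)) ^ (-m) *
  (Complex.exp (D.L.zeta D.lam * D.κ' j) * D.L.Psi D.lam (D.κ' j)) ^ (-h) *
  Complex.exp (D.L.zeta (D.xi n m h) * D.κ' j) * D.ν0 j

/-- The dressed elliptic Cauchy matrix `M_{ij} = ρ_i Ψ_ξ(κ_i + κ′_j) ν_j`. -/
def M (D : KPData N N') (n m h : ℤ) : Matrix (Fin N) (Fin N') ℂ :=
  Matrix.of fun i j => D.ρ i n m h * D.L.Psi (D.xi n m h) (D.κ i + D.κ' j) * D.ν j n m h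

/-- The column vector `r = (ρ_i Ψ_ξ(κ_i))_i`. -/
def r (D : KPData N N') (n m h : ℤ) : Fin N → ℂ :=
  fun i => D.ρ i n m h * D.L.Psi (D.xi n m h) (D.κ i)

/-- The column vector `s = (ν_j Ψ_ξ(κ′_j))_j`. -/
def s (D : KPData N N') (n m h : ℤ) : Fin N' → ℂ :=
  fun j => D.ν j n m h * D.L.Psi (D.xi n m h) (D.κ' j)

/-- The τ-function `τ = det(1 + MC)`. -/
def τ (D : KPData N N') (n m h : ℤ) : ℂ := (1 + D.M n m h * D.C).det

/-- The diagonal matrix `χ_{α,K}(ξ) = diag(χ_{α,κ_i}(ξ))`. -/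
def DK (D : KPData N N') (α : ℂ) (n m h : ℤ) : Matrix (Fin N) (Fin N) ℂ :=
  Matrix.diagonal fun i => D.L.chi α (D.κ i) (D.xi n m h)

/-- The diagonal matrix `χ_{β,K′}(ξ) = diag(χ_{β,κ′_j}(ξ))`. -/
def DK' (D : KPData N N') (β : ℂ) (n m h : ℤ) : Matrix (Fin N') (Fin N') ℂ :=
  Matrix.diagonal fun j => D.L.chi β (D.κ' j) (D.xi n m h)

/-- `W_β = 1 − sᵀ (χ_{β,K′}(ξ))⁻¹ C (1+MC)⁻¹ r`. -/
def W (D : KPData N N') (β : ℂ) (n m h : ℤ) : ℂ :=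
  1 - D.s n m h ⬝ᵥ ((D.DK' β n m h)⁻¹ *ᵥ (D.C *ᵥ ((1 + D.M n m h * D.C)⁻¹ *ᵥ D.r n m h)))

/-- `V_α = 1 − sᵀ (1+CM)⁻¹ C (χ_{α,K}(ξ))⁻¹ r`. -/
def V (D : KPData N N') (α : ℂ) (n m h : ℤ) : ℂ :=
  1 - D.s n m h ⬝ᵥ ((1 + D.C * D.M n m h)⁻¹ *ᵥ (D.C *ᵥ ((D.DK α n m h)⁻¹ *ᵥ D.r n m h)))

/-- `w₀ = sᵀ C (1+MC)⁻¹ r`. -/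
def w0 (D : KPData N N') (n m h : ℤ) : ℂ :=
  D.s n m h ⬝ᵥ (D.C *ᵥ ((1 + D.M n m h * D.C)⁻¹ *ᵥ D.r n m h))

/-- `w = ζ(ξ) − w₀ − nζ(δ) − mζ(ε) − hζ(λ)`. -/
def w (D : KPData N N') (n m h : ℤ) : ℂ :=
  D.L.zeta (D.xi n m h) - D.w0 n m h - n • D.L.zeta D.del - m • D.L.zeta D.eps -
    h • D.L.zeta D.lam

/-- `S_{β,α} = sᵀ (χ_{β,K′}(ξ))⁻¹ C (1+MC)⁻¹ (χ_{α,K}(ξ))⁻¹ r`. -/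
def S (D : KPData N N') (β α : ℂ) (n m h : ℤ) : ℂ :=
  D.s n m h ⬝ᵥ ((D.DK' β n m h)⁻¹ *ᵥ
    (D.C *ᵥ ((1 + D.M n m h * D.C)⁻¹ *ᵥ ((D.DK α n m h)⁻¹ *ᵥ D.r n m h))))

/-- `u_α = (1+MC)⁻¹ (χ_{α,K}(ξ))⁻¹ r`. -/
def u (D : KPData N N') (α : ℂ) (n m h : ℤ) : Fin N → ℂ :=
  (1 + D.M n m h * D.C)⁻¹ *ᵥ ((D.DK α n m h)⁻¹ *ᵥ D.r n m h)

/-- `u₀ = (1+MC)⁻¹ r`. -/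
def u0 (D : KPData N N') (n m h : ℤ) : Fin N → ℂ :=
  (1 + D.M n m h * D.C)⁻¹ *ᵥ D.r n m h

/-- the adjoint (row) vector `ᵗu_β = sᵀ (χ_{β,K′}(ξ))⁻¹ (1+CM)⁻¹`. -/
def tu (D : KPData N N') (β : ℂ) (n m h : ℤ) : Fin N' → ℂ :=
  (D.s n m h ᵥ* (D.DK' β n m h)⁻¹) ᵥ* (1 + D.C * D.M n m h)⁻¹

/-- the adjoint (row) vector `ᵗu₀ = sᵀ (1+CM)⁻¹`. -/
def tu0 (D : KPData N N') (n m h : ℤ) : Fin N' → ℂ :=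
  D.s n m h ᵥ* (1 + D.C * D.M n m h)⁻¹

/-- The gauge variable `𝒱_α = Φ_ξ(α)·V_α`. -/
def calV (D : KPData N N') (α : ℂ) (n m h : ℤ) : ℂ :=
  D.L.Phi (D.xi n m h) α * D.V α n m h

/-- The gauge variable `𝒲_β = Φ_ξ(β)·W_β`. -/
def calW (D : KPData N N') (β : ℂ) (n m h : ℤ) : ℂ :=
  D.L.Phi (D.xi n m h) β * D.W β n m h

/-- The Schwarzian variable `Z_{β,α} = Φ_ξ(α+β)·(1 − χ_{α,β}(ξ)·S_{β,α})`. -/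
def Z (D : KPData N N') (β α : ℂ) (n m h : ℤ) : ℂ :=
  D.L.Phi (D.xi n m h) (α + β) * (1 - D.L.chi α β (D.xi n m h) * D.S β α n m h)

/-- Genericity of the parameters (together with finitely many auxiliary points `extra`):
no nontrivial integer combination of `ξ₀, δ, ε, λ`, the rapidity parameters and the
auxiliary points lies on the lattice.  In particular all arguments of `σ` occurring in
the soliton solutions and their shifts lie outside `Λ`. -/
def Generic {P : ℕ} (D : KPData N N') (extra : Fin P → ℂ) : Prop :=
  ∀ (c0 cn cm ch : ℤ) (a : Fin N → ℤ) (b : Fin N' → ℤ) (e : Fin P → ℤ),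
    ¬ (c0 = 0 ∧ cn = 0 ∧ cm = 0 ∧ ch = 0 ∧ a = 0 ∧ b = 0 ∧ e = 0) →
    ¬ D.L.mem (c0 • D.xi0 + cn • D.del + cm • D.eps + ch • D.lam +
      (∑ i, a i • D.κ i) + (∑ j, b j • D.κ' j) + ∑ t, e t • extra t)

end KPData

open Filter Topology Complex in
theorem EA_factor_bound (w : ℂ) (hw : ‖w‖ ≤ 1 / 2) :
    ‖(1 - w) * Complex.exp (w + w ^ 2 / 2) - 1‖ ≤ 10 * ‖w‖ ^ 3 := by
  have hs : ‖w + w ^ 2 / 2‖ ≤ 5 / 4 * ‖w‖ := by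
    calc ‖w + w ^ 2 / 2‖ ≤ ‖w‖ + ‖w ^ 2 / 2‖ := norm_add_le _ _
      _ = ‖w‖ + ‖w‖ ^ 2 / 2 := by simp
      _ ≤ _ := by nlinarith [norm_nonneg w]
  have hs1 : ‖w + w ^ 2 / 2‖ ≤ 1 := by linarith
  have hb := Complex.exp_bound hs1 (n := 3) (by norm_num)
  set s := w + w ^ 2 / 2 with hsdef
  have e1 : (1 - w) * Complex.exp s - 1 =
      (1 - w) * (Complex.exp s - ∑ m ∈ Finset.range 3, s ^ m / (m.factorial : ℂ)) +
        w ^ 3 * (-1 / 2 - 3 / 8 * w - w ^ 2 / 8) := by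
    simp only [Finset.sum_range_succ, Finset.sum_range_zero, Nat.factorial, hsdef]
    push_cast
    ring
  rw [e1]
  have h2 : ‖(1 - w)‖ ≤ 3 / 2 := by
    calc ‖1 - w‖ ≤ ‖(1 : ℂ)‖ + ‖w‖ := norm_sub_le _ _
      _ ≤ _ := by simp; linarith
  have h3 : ‖(-1 / 2 - 3 / 8 * w - w ^ 2 / 8 : ℂ)‖ ≤ 2 := by
    calc ‖(-1 / 2 - 3 / 8 * w - w ^ 2 / 8 : ℂ)‖ ≤ ‖(-1 / 2 : ℂ)‖ + ‖3 / 8 * w‖ + ‖w ^ 2 / 8‖ :=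
          (norm_sub_le _ _).trans (by gcongr; exact norm_sub_le _ _)
      _ = 1 / 2 + 3 / 8 * ‖w‖ + ‖w‖ ^ 2 / 8 := by simp
      _ ≤ _ := by nlinarith [norm_nonneg w]
  have h4 : ‖s‖ ^ 3 ≤ 2 * ‖w‖ ^ 3 := by
    calc ‖s‖ ^ 3 ≤ (5 / 4 * ‖w‖) ^ 3 := by gcongr
      _ ≤ _ := by nlinarith [pow_nonneg (norm_nonneg w) 3]
  have h5 : ‖Complex.exp s - ∑ m ∈ Finset.range 3, s ^ m / (m.factorial : ℂ)‖ ≤ ‖s‖ ^ 3 := by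
    refine hb.trans ?_
    have : ((Nat.succ 3 : ℕ) : ℝ) * (((Nat.factorial 3 : ℕ) : ℝ) * ((3 : ℕ) : ℝ))⁻¹ ≤ 1 := by
      norm_num [Nat.factorial]
    exact mul_le_of_le_one_right (by positivity) this
  calc _ ≤ ‖1 - w‖ * ‖Complex.exp s - ∑ m ∈ Finset.range 3, s ^ m / (m.factorial : ℂ)‖ +
        ‖w‖ ^ 3 * ‖(-1 / 2 - 3 / 8 * w - w ^ 2 / 8 : ℂ)‖ := by
        refine (norm_add_le _ _).trans ?_
        rw [norm_mul, norm_mul, norm_pow]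
    _ ≤ 3 / 2 * (2 * ‖w‖ ^ 3) + ‖w‖ ^ 3 * 2 := by
        gcongr
        exact h5.trans h4
    _ ≤ _ := by nlinarith [pow_nonneg (norm_nonneg w) 3]

/-- The factor of the sigma product at the lattice point `l`. -/
noncomputable def EA_F (l z : ℂ) : ℂ :=
  open Classical in
  if l = 0 then z else (1 - z / l) * Complex.exp (z / l + z ^ 2 / (2 * l ^ 2))

theorem EA_F_diff (l : ℂ) : Differentiable ℂ (EA_F l) := by
  unfold EA_F
  split_ifs
  · fun_prop
  · fun_prop

theorem EA_F_neg (l z : ℂ) : EA_F (-l) (-z) = if l = 0 then -z else EA_F l z := by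
  unfold EA_F
  by_cases h : l = 0
  · simp [h]
  · simp [h, neg_div_neg_eq]

theorem EA_F_ne (l z : ℂ) (h : z ≠ l) : EA_F l z ≠ 0 := by
  unfold EA_F
  split_ifs with h0
  · exact h0 ▸ h
  · refine mul_ne_zero ?_ (Complex.exp_ne_zero _)
    rw [sub_ne_zero]
    intro h1
    rw [eq_div_iff h0] at h1
    exact h (by linear_combination -h1)

theorem EA_cofinite_norm (P : PeriodPair) (R : ℝ) :
    ∀ᶠ l : P.lattice in Filter.cofinite, R < ‖(l : ℂ)‖ := by
  have := (isCompact_iff_finite.mp (isCompact_closedBall (0 : P.lattice) R))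
  refine this.subset ?_
  intro l hl
  simpa using hl

theorem EA_F_bound (P : PeriodPair) (r : ℝ) (hr : 0 < r) :
    ∀ᶠ l : P.lattice in Filter.cofinite, ∀ z ∈ Metric.ball (0 : ℂ) r,
      ‖EA_F l z - 1‖ ≤ 10 * r ^ 3 * ‖l‖⁻¹ ^ 3 := by
  filter_upwards [EA_cofinite_norm P (2 * r)] with l hl z hz
  have hz' : ‖z‖ < r := by simpa using hz
  have hl0 : 0 < ‖(l : ℂ)‖ := by linarith
  have hne : (l : ℂ) ≠ 0 := norm_pos_iff.mp hl0
  have hw : ‖z / (l : ℂ)‖ ≤ r * ‖(l : ℂ)‖⁻¹ := by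
    rw [norm_div, div_eq_mul_inv]; gcongr
  have hw2 : ‖z / (l : ℂ)‖ ≤ 1 / 2 := by
    rw [norm_div, div_le_iff₀ hl0]; linarith
  have := EA_factor_bound _ hw2
  have e : EA_F l z = (1 - z / l) * Complex.exp (z / l + (z / l) ^ 2 / 2) := by
    rw [EA_F, if_neg hne]
    congr 3
    field_simp
  rw [e]
  refine this.trans ?_
  calc 10 * ‖z / (l : ℂ)‖ ^ 3 ≤ 10 * (r * ‖(l : ℂ)‖⁻¹) ^ 3 := by gcongr
    _ = _ := by rw [mul_pow]; simp [mul_assoc]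

theorem EA_summable (P : PeriodPair) : Summable fun l : P.lattice => ‖l‖⁻¹ ^ 3 :=
  ZLattice.summable_norm_pow_inv _ 3 (by simp)

theorem EA_F_summable (P : PeriodPair) (z : ℂ) :
    Summable fun l : P.lattice => ‖EA_F l z - 1‖ := by
  have h := EA_F_bound P (‖z‖ + 1) (by positivity)
  refine Summable.of_norm_bounded_eventually
    ((EA_summable P).mul_left (10 * (‖z‖ + 1) ^ 3)) ?_
  filter_upwards [h] with l hl
  simpa using hl z (by simp)

theorem EA_F_mult (P : PeriodPair) (z : ℂ) :
    Multipliable fun l : P.lattice => EA_F l z := by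
  simpa using multipliable_one_add_of_summable (EA_F_summable P z)

/-- sigma as a product over the whole lattice. -/
noncomputable def EA_S (P : PeriodPair) (z : ℂ) : ℂ := ∏' l : P.lattice, EA_F l z

theorem EA_S_ne (P : PeriodPair) (z : ℂ) (hz : z ∉ P.lattice) : EA_S P z ≠ 0 := by
  have := tprod_one_add_ne_zero_of_summable (f := fun l : P.lattice => EA_F l z - 1)
    (fun l => by
      simpa using EA_F_ne l z (fun h => hz (h ▸ l.2))) (EA_F_summable P z)
  simpa [EA_S] using this

theorem EA_S_diff (P : PeriodPair) : Differentiable ℂ (EA_S P) := by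
  intro z
  have h := Summable.hasProdLocallyUniformlyOn_one_add (f := fun (l : P.lattice) z => EA_F l z - 1)
    (K := Metric.ball (0 : ℂ) (‖z‖ + 1)) Metric.isOpen_ball
    ((EA_summable P).mul_left (10 * (‖z‖ + 1) ^ 3)) (EA_F_bound P (‖z‖ + 1) (by positivity))
    (fun l => ((EA_F_diff l).continuous.sub continuous_const).continuousOn)
  rw [hasProdLocallyUniformlyOn_iff_tendstoLocallyUniformlyOn] at h
  have h2 := h.differentiableOn (.of_forall fun s => ?_) Metric.isOpen_ball
  · have h3 := h2.differentiableAt (Metric.isOpen_ball.mem_nhds (by simp : z ∈ _))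
    simpa [EA_S] using! h3
  · apply DifferentiableOn.fun_finsetProd
    intro i _
    simpa using! (EA_F_diff i).differentiableOn

theorem EA_S_neg (P : PeriodPair) (z : ℂ) : EA_S P (-z) = - EA_S P z := by
  classical
  have h1 : EA_S P (-z) = ∏' l : P.lattice, ((if l = 0 then -1 else 1) * EA_F l z) := by
    rw [EA_S, ← (Equiv.neg P.lattice).tprod_eq]
    refine tprod_congr fun l => ?_
    have := EA_F_neg l z
    by_cases h : l = 0
    · subst h; simp [EA_F]
    · have h' : (l : ℂ) ≠ 0 := by simpa using h
      simpa [h, h'] using this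
  have h2 : Multipliable fun l : P.lattice => (if l = 0 then (-1 : ℂ) else 1) :=
    (hasProd_ite_eq 0 (-1 : ℂ)).multipliable
  rw [h1, Multipliable.tprod_mul h2 (EA_F_mult P z), tprod_ite_eq]
  simp [EA_S]

theorem EA_S_zero (P : PeriodPair) : EA_S P 0 = 0 := by
  have := EA_S_neg P 0
  simp at this
  exact self_eq_neg.mp this

theorem EA_S_eq (P : PeriodPair) (z : ℂ) :
    EA_S P z = z * ∏' l : {l : P.lattice // l ≠ 0},
      (1 - z / l.1) * Complex.exp (z / l.1 + z ^ 2 / (2 * (l.1 : ℂ) ^ 2)) := by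
  classical
  set g : P.lattice → ℂ := fun l => if l = 0 then 1 else EA_F l z with hg
  have hgm : Multipliable g := by
    have : Summable fun l : P.lattice => ‖g l - 1‖ := by
      refine (EA_F_summable P z).of_nonneg_of_le (fun _ => norm_nonneg _) fun l => ?_
      simp only [hg]; split_ifs <;> simp
    simpa using multipliable_one_add_of_summable this
  have h2 : Multipliable fun l : P.lattice => (if l = 0 then z else 1) :=
    (hasProd_ite_eq 0 z).multipliable
  have h1 : EA_S P z = ∏' l : P.lattice, ((if l = 0 then z else 1) * g l) := by
    refine tprod_congr fun l => ?_
    by_cases h : l = 0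
    · subst h; simp [EA_F, g]
    · simp [h, g]
  rw [h1, Multipliable.tprod_mul h2 hgm, tprod_ite_eq]
  congr 1
  have h3 := tprod_subtype (s := {l : P.lattice | l ≠ 0}) (fun l : P.lattice => EA_F l z)
  have h4 : g = Set.mulIndicator {l : P.lattice | l ≠ 0} (fun l : P.lattice => EA_F l z) := by
    ext l
    simp only [hg, Set.mulIndicator, Set.mem_ofPred_eq]
    by_cases h : l = 0 <;> simp [h]
  rw [h4, ← h3]
  refine tprod_congr fun l => ?_
  have : (l.1 : ℂ) ≠ 0 := fun h => l.2 (by ext; exact h)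
  simp [EA_F, this]


/-- The factor of the sigma product with the factor at zero removed. -/
noncomputable def EA_G (l z : ℂ) : ℂ :=
  open Classical in
  if l = 0 then 1 else EA_F l z

theorem EA_G_diff (l : ℂ) : Differentiable ℂ (EA_G l) := by
  unfold EA_G
  split_ifs
  · fun_prop
  · exact EA_F_diff l

theorem EA_T_diff (P : PeriodPair) :
    Differentiable ℂ (fun z => ∏' l : P.lattice, EA_G l z) := by
  intro z
  have h := Summable.hasProdLocallyUniformlyOn_one_add (f := fun (l : P.lattice) z => EA_G l z - 1)
    (K := Metric.ball (0 : ℂ) (‖z‖ + 1)) Metric.isOpen_ball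
    ((EA_summable P).mul_left (10 * (‖z‖ + 1) ^ 3)) (by
      filter_upwards [EA_F_bound P (‖z‖ + 1) (by positivity)] with l hl z hz
      refine le_trans ?_ (hl z hz)
      unfold EA_G; split_ifs <;> simp)
    (fun l => ((EA_G_diff l).continuous.sub continuous_const).continuousOn)
  rw [hasProdLocallyUniformlyOn_iff_tendstoLocallyUniformlyOn] at h
  have h2 := h.differentiableOn (.of_forall fun s => ?_) Metric.isOpen_ball
  · have h3 := h2.differentiableAt (Metric.isOpen_ball.mem_nhds (by simp : z ∈ _))
    simpa using! h3
  · apply DifferentiableOn.fun_finsetProd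
    intro i _
    simpa using! (EA_G_diff i).differentiableOn

theorem EA_S_eq_T (P : PeriodPair) (z : ℂ) :
    EA_S P z = z * ∏' l : P.lattice, EA_G l z := by
  classical
  have hgm : Multipliable fun l : P.lattice => EA_G l z := by
    have : Summable fun l : P.lattice => ‖EA_G l z - 1‖ := by
      refine (EA_F_summable P z).of_nonneg_of_le (fun _ => norm_nonneg _) fun l => ?_
      unfold EA_G; split_ifs <;> simp
    simpa using multipliable_one_add_of_summable this
  have h2 : Multipliable fun l : P.lattice => (if l = 0 then z else 1) :=
    (hasProd_ite_eq 0 z).multipliable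
  have h1 : EA_S P z = ∏' l : P.lattice, ((if l = 0 then z else 1) * EA_G l z) := by
    refine tprod_congr fun l => ?_
    by_cases h : l = 0
    · subst h; simp [EA_F, EA_G]
    · have h' : (l : ℂ) ≠ 0 := by simpa using h
      simp [h, EA_G]
  rw [h1, Multipliable.tprod_mul h2 hgm, tprod_ite_eq]

theorem EA_S_deriv_zero (P : PeriodPair) : HasDerivAt (EA_S P) 1 0 := by
  have h := (hasDerivAt_id (0 : ℂ)).mul (EA_T_diff P 0).hasDerivAt
  have e : EA_S P = (id * fun z => ∏' l : P.lattice, EA_G l z) := by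
    ext z; simp [EA_S_eq_T]
  rw [e]
  have h0 : ∏' l : P.lattice, EA_G l 0 = 1 := by
    have : ∀ l : P.lattice, EA_G l 0 = 1 := by
      intro l; unfold EA_G EA_F; split_ifs <;> simp
    simp [this]
  simpa [h0] using h

/-- The multiplicative constants in the quasi-periodicity. -/
noncomputable def EA_c (w l : ℂ) : ℂ :=
  open Classical in
  if l = w then -Complex.exp (3 / 2) / w else EA_F l w

theorem EA_F_shift (w l z : ℂ) (hw : w ≠ 0) :
    EA_F l (z + w) = EA_c w l * Complex.exp (z * (1 / l + w / l ^ 2 - 1 / (l - w)) +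
      z ^ 2 * ((1 / l ^ 2 - 1 / (w - l) ^ 2) / 2)) * EA_F (l - w) z := by
  by_cases h1 : l = w
  · subst h1
    simp only [EA_F, EA_c, if_neg hw, if_true, sub_self]
    rw [show (1 - (z + l) / l) = -z / l by field_simp; ring,
      show (z + l) / l + (z + l) ^ 2 / (2 * l ^ 2) = 3 / 2 + (z * (1 / l + l / l ^ 2 - 1 / 0) +
      z ^ 2 * ((1 / l ^ 2 - 1 / 0 ^ 2) / 2)) by field_simp; ring, Complex.exp_add]
    ring
  by_cases h0 : l = 0
  · subst h0
    have hw' : (0 : ℂ) - w ≠ 0 := by simpa using hw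
    simp only [EA_F, EA_c, if_neg h1, if_true, if_neg hw']
    rw [mul_comm (1 - z / (0 - w)), ← mul_assoc, mul_assoc w, ← Complex.exp_add]
    rw [show z * (1 / 0 + w / 0 ^ 2 - 1 / (0 - w)) + z ^ 2 * ((1 / 0 ^ 2 - 1 / (w - 0) ^ 2) / 2) +
      (z / (0 - w) + z ^ 2 / (2 * (0 - w) ^ 2)) = 0 by field_simp; ring]
    simp
    field_simp
    ring
  · have h3 : l - w ≠ 0 := sub_ne_zero.mpr h1
    have h4 : w - l ≠ 0 := sub_ne_zero.mpr (Ne.symm h1)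
    simp only [EA_F, EA_c, if_neg h1, if_neg h0, if_neg h3]
    have e : (z + w) / l + (z + w) ^ 2 / (2 * l ^ 2) = (w / l + w ^ 2 / (2 * l ^ 2)) +
      (z * (1 / l + w / l ^ 2 - 1 / (l - w)) + z ^ 2 * ((1 / l ^ 2 - 1 / (w - l) ^ 2) / 2)) +
      (z / (l - w) + z ^ 2 / (2 * (l - w) ^ 2)) := by
      rw [show (w - l) ^ 2 = (l - w) ^ 2 by ring]
      field_simp; ring
    rw [e, Complex.exp_add, Complex.exp_add,
      show 1 - (z + w) / l = (1 - w / l) * (1 - z / (l - w)) by field_simp; ring]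
    ring

theorem EA_c_mult (P : PeriodPair) (w : ℂ) : Multipliable fun l : P.lattice => EA_c w l := by
  have h := EA_F_bound P (‖w‖ + 1) (by positivity)
  have : Summable fun l : P.lattice => ‖EA_c w l - 1‖ := by
    refine Summable.of_norm_bounded_eventually
      ((EA_summable P).mul_left (10 * (‖w‖ + 1) ^ 3)) ?_
    filter_upwards [h, EA_cofinite_norm P ‖w‖] with l hl hl2
    have : (l : ℂ) ≠ w := by rintro rfl; exact lt_irrefl _ hl2
    simpa [EA_c, this] using hl w (by simp)
  simpa using multipliable_one_add_of_summable this

theorem EA_B_summable (P : PeriodPair) (w : ℂ) :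
    Summable fun l : P.lattice => (1 / (l : ℂ) + w / (l : ℂ) ^ 2 - 1 / (l - w)) := by
  refine Summable.of_norm_bounded_eventually
      ((EA_summable P).mul_left (2 * ‖w‖ ^ 2)) ?_
  filter_upwards [EA_cofinite_norm P (2 * ‖w‖)] with l hl
  have hl0 : 0 < ‖(l : ℂ)‖ := by linarith [norm_nonneg w]
  have hne : (l : ℂ) ≠ 0 := norm_pos_iff.mp hl0
  have h1 : ‖(l : ℂ)‖ / 2 ≤ ‖(l : ℂ) - w‖ := by
    have := norm_sub_norm_le (l : ℂ) w
    linarith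
  have h2 : (l : ℂ) - w ≠ 0 := norm_pos_iff.mp (by linarith)
  have e : (1 / (l : ℂ) + w / (l : ℂ) ^ 2 - 1 / (l - w)) = -w ^ 2 / (l ^ 2 * (l - w)) := by
    field_simp; ring
  rw [e, norm_div, norm_neg, norm_mul, norm_pow, norm_pow]
  calc ‖w‖ ^ 2 / (‖(l : ℂ)‖ ^ 2 * ‖(l : ℂ) - w‖) ≤ ‖w‖ ^ 2 / (‖(l : ℂ)‖ ^ 2 * (‖(l : ℂ)‖ / 2)) := by
        gcongr
    _ = 2 * ‖w‖ ^ 2 * ‖l‖⁻¹ ^ 3 := by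
        have e3 : ‖l‖ = ‖(l : ℂ)‖ := rfl
        rw [e3]
        field_simp

theorem EA_C_summable (P : PeriodPair) (w : ℂ) :
    Summable fun l : P.lattice => ((1 / (l : ℂ) ^ 2 - 1 / (w - l) ^ 2) / 2) := by
  have := (P.hasSum_weierstrassP w).summable.neg.div_const 2
  refine this.congr fun l => ?_
  ring

theorem EA_quasi_aux (P : PeriodPair) (w : ℂ) (hwl : w ∈ P.lattice) (hw : w ≠ 0) :
    ∃ A B C : ℂ, ∀ z, EA_S P (z + w) = A * Complex.exp (z * B + z ^ 2 * C) * EA_S P z := by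
  refine ⟨∏' l : P.lattice, EA_c w l,
    ∑' l : P.lattice, (1 / (l : ℂ) + w / (l : ℂ) ^ 2 - 1 / (l - w)),
    ∑' l : P.lattice, ((1 / (l : ℂ) ^ 2 - 1 / (w - l) ^ 2) / 2), fun z => ?_⟩
  have hs := (((EA_B_summable P w).hasSum.mul_left z).add
    ((EA_C_summable P w).hasSum.mul_left (z ^ 2))).cexp
  have e2 : EA_S P z = ∏' l : P.lattice, EA_F (l - w) z := by
    rw [EA_S, ← (Equiv.subRight (⟨w, hwl⟩ : P.lattice)).tprod_eq]
    simp
  have m2 : Multipliable fun l : P.lattice => EA_F (l - w) z := by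
    have := (Equiv.subRight (⟨w, hwl⟩ : P.lattice)).multipliable_iff.mpr (EA_F_mult P z)
    simpa [Function.comp_def] using this
  rw [← hs.tprod_eq, e2, ← Multipliable.tprod_mul (EA_c_mult P w) hs.multipliable,
    ← Multipliable.tprod_mul ((EA_c_mult P w).mul hs.multipliable) m2]
  refine tprod_congr fun l => ?_
  exact EA_F_shift w l z hw

theorem EA_quasi (P : PeriodPair) (w : ℂ) (hwl : w ∈ P.lattice) :
    ∃ A B : ℂ, A ≠ 0 ∧ ∀ z, EA_S P (z + w) = A * Complex.exp (z * B) * EA_S P z := by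
  by_cases hw : w = 0
  · exact ⟨1, 0, one_ne_zero, fun z => by simp [hw]⟩
  obtain ⟨A, B, C, h⟩ := EA_quasi_aux P w hwl hw
  have h1 : ∀ z, z ∉ P.lattice →
      A ^ 2 * Complex.exp (2 * C * (z ^ 2 + w * z) + (C * w ^ 2 - B * w)) = 1 := by
    intro z hz
    have a1 := h z
    have a2 := h (-z - w)
    rw [show -z - w + w = -z by ring, show -z - w = -(z + w) by ring, EA_S_neg, EA_S_neg, a1] at a2
    have a3 := EA_S_ne P z hz
    have a4 : 1 = A ^ 2 * (Complex.exp (-(z + w) * B + (-(z + w)) ^ 2 * C) *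
        Complex.exp (z * B + z ^ 2 * C)) := by
      apply mul_right_cancel₀ a3
      linear_combination -a2
    rw [← Complex.exp_add] at a4
    rw [a4]
    congr 2
    ring
  have hA : A ≠ 0 := by
    rintro rfl
    have := h1 _ P.ω₁_div_two_notMem_lattice
    simp at this
  refine ⟨A, B, hA, ?_⟩
  have hC : C = 0 := by
    have hopen := P.isClosed_lattice.isOpen_compl
    have hd : ∀ z, z ∉ P.lattice → 2 * C * (2 * z + w) = 0 := by
      intro z hz
      have ev : (fun z => A ^ 2 * Complex.exp (2 * C * (z ^ 2 + w * z) + (C * w ^ 2 - B * w)))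
          =ᶠ[nhds z] fun _ => 1 := by
        filter_upwards [hopen.mem_nhds hz] with y hy using h1 y hy
      have d1 : HasDerivAt (fun z => A ^ 2 * Complex.exp (2 * C * (z ^ 2 + w * z) +
          (C * w ^ 2 - B * w))) (A ^ 2 * (Complex.exp (2 * C * (z ^ 2 + w * z) +
          (C * w ^ 2 - B * w)) * (2 * C * (2 * z + w)))) z := by
        refine HasDerivAt.const_mul _ (HasDerivAt.cexp ?_)
        have := ((((hasDerivAt_id z).pow 2).add ((hasDerivAt_id z).const_mul w)).const_mul
          (2 * C)).add_const (C * w ^ 2 - B * w)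
        simpa using! this
      have d2 := (hasDerivAt_const z (1 : ℂ)).congr_of_eventuallyEq ev
      have := d1.unique d2
      simpa [hA, Complex.exp_ne_zero] using this
    have q1 := hd _ P.ω₁_div_two_notMem_lattice
    have q2 := hd _ P.ω₂_div_two_notMem_lattice
    by_contra hC
    have hne : P.ω₁ ≠ P.ω₂ := by
      have := P.indep.injective.ne (show (0 : Fin 2) ≠ 1 by decide)
      simpa using this
    apply hne
    have : 2 * C * (P.ω₁ - P.ω₂) = 0 := by linear_combination q1 - q2
    simpa [hC, sub_eq_zero] using this
  intro z
  rw [h z, hC]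
  simp

open Filter Topology in
theorem EA_const (P : PeriodPair) (f D : ℂ → ℂ) (hf : Differentiable ℂ f) (hD : Differentiable ℂ D)
    (hz : ∀ z, D z = 0 → f z = 0 ∧ deriv D z ≠ 0)
    (hp : ∀ w ∈ P.lattice, ∃ μ : ℂ → ℂ, Differentiable ℂ μ ∧ (∀ z, μ z ≠ 0) ∧
      (∀ z, f (z + w) = μ z * f z) ∧ ∀ z, D (z + w) = μ z * D z)
    (a : ℂ) (ha : D a ≠ 0) (hfa : f a = 0) (t : ℂ) : f t = 0 := by
  classical
  set g : ℂ → ℂ := fun z => if D z = 0 then deriv f z / deriv D z else f z / D z with hg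
  have hgd : Differentiable ℂ g := by
    intro z0
    by_cases h0 : D z0 = 0
    · obtain ⟨hf0, hD0⟩ := hz z0 h0
      have d1 : DifferentiableAt ℂ (dslope f z0) z0 :=
        ((Complex.differentiableOn_dslope Filter.univ_mem).mpr hf.differentiableOn).differentiableAt
          Filter.univ_mem
      have d2 : DifferentiableAt ℂ (dslope D z0) z0 :=
        ((Complex.differentiableOn_dslope Filter.univ_mem).mpr hD.differentiableOn).differentiableAt
          Filter.univ_mem
      have hne : dslope D z0 z0 ≠ 0 := by rwa [dslope_same]
      refine (d1.div d2 hne).congr_of_eventuallyEq ?_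
      filter_upwards [d2.continuousAt.eventually_ne hne] with z hz1
      by_cases hzz : z = z0
      · subst hzz
        simp [hg, h0]
      · have e1 : (z - z0) * dslope f z0 z = f z := by
          have := sub_smul_dslope f z0 z
          simpa [hf0] using this
        have e2 : (z - z0) * dslope D z0 z = D z := by
          have := sub_smul_dslope D z0 z
          simpa [h0] using this
        have hs : z - z0 ≠ 0 := sub_ne_zero.mpr hzz
        have hDz : D z ≠ 0 := by rw [← e2]; exact mul_ne_zero hs hz1
        simp only [hg, hDz, if_false, Pi.div_apply]
        rw [← e1, ← e2, mul_div_mul_left _ _ hs]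
    · refine (hf.differentiableAt.div hD.differentiableAt h0 :
        DifferentiableAt ℂ (f / D) z0).congr_of_eventuallyEq ?_
      filter_upwards [hD.continuous.continuousAt.eventually_ne h0] with z hz1
      simp [hg, hz1]
  have hgp : ∀ z w, w ∈ P.lattice → g (z + w) = g z := by
    intro z w hw
    obtain ⟨μ, hμ, hμ0, h1, h2⟩ := hp w hw
    by_cases h0 : D z = 0
    · obtain ⟨hf0, hD0⟩ := hz z h0
      have h0' : D (z + w) = 0 := by rw [h2, h0, mul_zero]
      have key : ∀ F : ℂ → ℂ, Differentiable ℂ F → F z = 0 → (∀ z, F (z + w) = μ z * F z) →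
          deriv F (z + w) = μ z * deriv F z := by
        intro F hF hF0 hFe
        have e : (fun z => F (z + w)) = fun z => μ z * F z := funext hFe
        have d : deriv (fun z => F (z + w)) z = deriv F (z + w) := deriv_comp_add_const F w z
        rw [← d, e]
        have := ((hμ z).hasDerivAt.mul (hF z).hasDerivAt).deriv
        simpa [hF0] using! this
      simp only [hg, h0, h0', if_true]
      rw [key f hf hf0 h1, key D hD h0 h2, mul_div_mul_left _ _ (hμ0 z)]
    · have h0' : D (z + w) ≠ 0 := by rw [h2]; exact mul_ne_zero (hμ0 z) h0
      simp only [hg, h0, h0', if_false]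
      rw [h1, h2, mul_div_mul_left _ _ (hμ0 z)]
  have hb := (IsZLattice.isCompact_range_of_periodic P.lattice g hgd.continuous hgp).isBounded
  have hc := hgd.apply_eq_apply_of_bounded hb t a
  by_cases h0 : D t = 0
  · exact (hz t h0).1
  · simpa [hg, h0, ha, hfa] using hc

theorem EA_S_lat (P : PeriodPair) (w : ℂ) (hw : w ∈ P.lattice) : EA_S P w = 0 := by
  obtain ⟨A, B, -, h⟩ := EA_quasi P w hw
  have := h 0
  simpa [EA_S_zero] using this

theorem EA_S_deriv_lat (P : PeriodPair) (w : ℂ) (hw : w ∈ P.lattice) : deriv (EA_S P) w ≠ 0 := by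
  obtain ⟨A, B, hA, h⟩ := EA_quasi P w hw
  have e : (fun z => EA_S P (z + w)) = fun z => A * Complex.exp (z * B) * EA_S P z := funext h
  have d : deriv (fun z => EA_S P (z + w)) 0 = deriv (EA_S P) (0 + w) :=
    deriv_comp_add_const (EA_S P) w 0
  rw [zero_add] at d
  rw [← d, e]
  have hd : HasDerivAt (fun z => A * Complex.exp (z * B)) (A * (Complex.exp (0 * B) * B)) 0 := by
    refine HasDerivAt.const_mul _ (HasDerivAt.cexp ?_)
    simpa using (hasDerivAt_id (0 : ℂ)).mul_const B
  have := (hd.mul (EA_S_deriv_zero P)).deriv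
  simp only [EA_S_zero] at this
  have h2 : deriv (fun z => A * Complex.exp (z * B) * EA_S P z) 0 = A := by
    simpa using! this
  rw [h2]
  exact hA

theorem EA_S_eq_zero (P : PeriodPair) (z : ℂ) : EA_S P z = 0 ↔ z ∈ P.lattice :=
  ⟨fun h => by_contra fun h' => EA_S_ne P z h' h, EA_S_lat P z⟩

set_option maxHeartbeats 1000000 in
/-- The three-term (Fay type) sigma identity. -/
theorem EA_key (P : PeriodPair) (a b c : ℂ) (ha : a ∉ P.lattice) (hbc : b + c ∉ P.lattice)
    (habc : a + b + c ∉ P.lattice) (t : ℂ) :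
    EA_S P (b + c + t) * EA_S P t * (EA_S P (a + b) * EA_S P (a + c)) =
      EA_S P (b + t) * EA_S P (c + t) * (EA_S P a * EA_S P (a + b + c)) -
        EA_S P (a + b + c + t) * EA_S P (a - t) * (EA_S P b * EA_S P c) := by
  have hS := EA_S_diff P
  have hS' : ∀ k, Differentiable ℂ fun t => EA_S P (k + t) := fun k =>
    hS.comp ((differentiable_const k).add differentiable_id)
  have hS'' : ∀ k, Differentiable ℂ fun t => EA_S P (k - t) := fun k =>
    hS.comp ((differentiable_const k).sub differentiable_id)
  set f : ℂ → ℂ := fun t => EA_S P (b + t) * EA_S P (c + t) * (EA_S P a * EA_S P (a + b + c)) -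
        EA_S P (a + b + c + t) * EA_S P (a - t) * (EA_S P b * EA_S P c) -
        EA_S P (b + c + t) * EA_S P t * (EA_S P (a + b) * EA_S P (a + c)) with hf
  set D : ℂ → ℂ := fun t => EA_S P (b + c + t) * EA_S P t with hD
  have hp : ∀ w ∈ P.lattice, ∃ μ : ℂ → ℂ, Differentiable ℂ μ ∧ (∀ z, μ z ≠ 0) ∧
      (∀ z, f (z + w) = μ z * f z) ∧ ∀ z, D (z + w) = μ z * D z := by
    intro w hw
    obtain ⟨A, B, hA, h⟩ := EA_quasi P w hw
    have hc : ∀ k z, EA_S P (k + (z + w)) = A * Complex.exp ((k + z) * B) * EA_S P (k + z) := by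
      intro k z; rw [← add_assoc]; exact h _
    have hm : ∀ k z, EA_S P (k - (z + w)) = A * Complex.exp ((z - k) * B) * EA_S P (k - z) := by
      intro k z
      rw [show k - (z + w) = -((z - k) + w) by ring, EA_S_neg, h, show k - z = -(z - k) by ring,
        EA_S_neg]
      ring
    refine ⟨fun z => A ^ 2 * Complex.exp ((b + c + 2 * z) * B), by fun_prop,
      fun z => mul_ne_zero (pow_ne_zero _ hA) (Complex.exp_ne_zero _), fun z => ?_, fun z => ?_⟩
    · simp only [hf, hc, hm, h]
      have e1 : Complex.exp ((b + c + 2 * z) * B) =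
          Complex.exp ((b + z) * B) * Complex.exp ((c + z) * B) := by
        rw [← Complex.exp_add]; ring_nf
      have e2 : Complex.exp ((a + b + c + z) * B) * Complex.exp ((z - a) * B) =
          Complex.exp ((b + z) * B) * Complex.exp ((c + z) * B) := by
        rw [← Complex.exp_add, ← Complex.exp_add]; ring_nf
      have e3 : Complex.exp ((b + c + z) * B) * Complex.exp (z * B) =
          Complex.exp ((b + z) * B) * Complex.exp ((c + z) * B) := by
        rw [← Complex.exp_add, ← Complex.exp_add]; ring_nf
      rw [e1]
      linear_combination (-(A ^ 2 * EA_S P (a + b + c + z) * EA_S P (a - z) *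
          (EA_S P b * EA_S P c))) * e2 -
        A ^ 2 * EA_S P (b + c + z) * EA_S P z * (EA_S P (a + b) * EA_S P (a + c)) * e3
    · simp only [hD, hc, h]
      have e3 : Complex.exp ((b + c + z) * B) * Complex.exp (z * B) =
          Complex.exp ((b + c + 2 * z) * B) := by
        rw [← Complex.exp_add]; ring_nf
      rw [← e3]; ring
  have main := EA_const P f D
    (((((hS' b).mul (hS' c)).mul_const _).sub (((hS' _).mul (hS'' a)).mul_const _)).sub
      (((hS' _).mul hS).mul_const _)) ((hS' _).mul hS) ?_ hp a ?_ ?_ t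
  · simp only [hf] at main
    linear_combination -main
  · intro z hz
    have hper : ∀ x w, w ∈ P.lattice → f x = 0 → f (x + w) = 0 := by
      intro x w hw hx
      obtain ⟨μ, -, -, h, -⟩ := hp w hw
      rw [h, hx, mul_zero]
    have hder : deriv D z = deriv (EA_S P) (b + c + z) * EA_S P z +
        EA_S P (b + c + z) * deriv (EA_S P) z := by
      have d1 : deriv (fun t => EA_S P (b + c + t)) z = deriv (EA_S P) (b + c + z) :=
        deriv_comp_const_add (EA_S P) _ z
      rw [← d1]
      exact ((hS' (b + c) z).hasDerivAt.mul (hS z).hasDerivAt).deriv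
    rw [hder]
    simp only [hD, mul_eq_zero, EA_S_eq_zero] at hz
    rcases hz with hz | hz
    · have hz' : z ∉ P.lattice := fun h' => hbc (by simpa using sub_mem hz h')
      constructor
      · have := hper (-(b + c)) _ hz ?_
        · rwa [show -(b + c) + (b + c + z) = z by ring] at this
        · simp only [hf]
          rw [show b + -(b + c) = -c by ring, show c + -(b + c) = -b by ring,
            show a + b + c + -(b + c) = a by ring, show a - -(b + c) = a + b + c by ring,
            add_neg_cancel, EA_S_zero, EA_S_neg, EA_S_neg]
          ring
      · rw [EA_S_lat P _ hz, zero_mul, add_zero]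
        exact mul_ne_zero (EA_S_deriv_lat P _ hz) (EA_S_ne P _ hz')
    · have hz' : b + c + z ∉ P.lattice := fun h' => hbc (by simpa using sub_mem h' hz)
      constructor
      · have := hper 0 _ hz ?_
        · rwa [zero_add] at this
        · simp only [hf]
          simp [EA_S_zero]
          ring
      · rw [EA_S_lat P _ hz, mul_zero, zero_add]
        exact mul_ne_zero (EA_S_ne P _ hz') (EA_S_deriv_lat P _ hz)
  · simp only [hD]
    refine mul_ne_zero (EA_S_ne P _ ?_) (EA_S_ne P _ ha)
    rwa [show b + c + a = a + b + c by ring]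
  · simp only [hf, sub_self, EA_S_zero]
    rw [show b + c + a = a + b + c by ring, add_comm b a, add_comm c a]
    ring

/-- The zeta form. -/
theorem EA_zeta (P : PeriodPair) (a b c : ℂ) (ha : a ∉ P.lattice) (hb : b ∉ P.lattice)
    (hc : c ∉ P.lattice) (hbc : b + c ∉ P.lattice) (habc : a + b + c ∉ P.lattice) :
    deriv (EA_S P) a / EA_S P a + deriv (EA_S P) b / EA_S P b + deriv (EA_S P) c / EA_S P c
      - deriv (EA_S P) (a + b + c) / EA_S P (a + b + c) =
    EA_S P (a + b) * EA_S P (b + c) * EA_S P (a + c) /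
      (EA_S P a * EA_S P b * EA_S P c * EA_S P (a + b + c)) := by
  have hS := EA_S_diff P
  have h := funext (EA_key P a b c ha hbc habc)
  have hd : ∀ k, HasDerivAt (fun t => EA_S P (k + t)) (deriv (EA_S P) k) 0 := by
    intro k
    have := HasDerivAt.comp_const_add k 0 (hS (k + 0)).hasDerivAt
    simpa using this
  have hd' : HasDerivAt (fun t => EA_S P (a - t)) (-deriv (EA_S P) a) 0 := by
    have := HasDerivAt.comp_const_sub a 0 (hS (a - 0)).hasDerivAt
    simpa using this
  have d1 := ((hd (b + c)).mul (EA_S_deriv_zero P)).mul_const (EA_S P (a + b) * EA_S P (a + c))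
  have d2 := (((hd b).mul (hd c)).mul_const (EA_S P a * EA_S P (a + b + c))).sub
    (((hd (a + b + c)).mul hd').mul_const (EA_S P b * EA_S P c))
  have d1' : HasDerivAt (fun t => EA_S P (b + c + t) * EA_S P t * (EA_S P (a + b) * EA_S P (a + c)))
    _ 0 := d1
  rw [h] at d1'
  have e := d1'.unique d2
  simp only [EA_S_zero, mul_zero, add_zero, mul_one, zero_add, sub_zero] at e
  have n1 := EA_S_ne P _ ha
  have n2 := EA_S_ne P _ hb
  have n3 := EA_S_ne P _ hc
  have n4 := EA_S_ne P _ habc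
  field_simp
  linear_combination -e

/-- The Mathlib period pair of an `EllLattice`. -/
def EA_pp (L : EllLattice) : PeriodPair where
  ω₁ := L.ω₁
  ω₂ := L.ω₂
  indep := LinearIndependent.pair_iff.mpr L.indep

theorem EA_mem (L : EllLattice) (z : ℂ) : L.mem z ↔ z ∈ (EA_pp L).lattice := by
  rw [PeriodPair.mem_lattice]
  simp only [EllLattice.mem, zsmul_eq_mul, EA_pp, eq_comm]

theorem EA_sigma (L : EllLattice) : L.sigma = EA_S (EA_pp L) := by
  funext z
  rw [EA_S_eq, EllLattice.sigma]
  congr 1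
  set e := (EA_pp L).latticeEquivProd.symm with he
  let E : {p : ℤ × ℤ // p ≠ 0} ≃ {l : (EA_pp L).lattice // l ≠ 0} :=
    e.toEquiv.subtypeEquiv (fun p => by simp)
  rw [← E.tprod_eq]
  refine tprod_congr fun p => ?_
  have : (((E p).1 : (EA_pp L).lattice) : ℂ) = L.per p.1 := by
    have := (EA_pp L).latticeEquiv_symm_apply p.1
    simp only [EllLattice.per, zsmul_eq_mul]
    exact this
  rw [this]

namespace EllLattice

theorem ea_ne (L : EllLattice) {z : ℂ} (h : ¬ L.mem z) : L.sigma z ≠ 0 := by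
  rw [EA_sigma]; exact EA_S_ne _ _ (by rwa [EA_mem] at h)

theorem ea_neg (L : EllLattice) (z : ℂ) : L.sigma (-z) = - L.sigma z := by
  rw [EA_sigma]; exact EA_S_neg _ _

theorem ea_key (L : EllLattice) (a b c t : ℂ) (ha : ¬ L.mem a) (hbc : ¬ L.mem (b + c))
    (habc : ¬ L.mem (a + b + c)) :
    L.sigma (b + c + t) * L.sigma t * (L.sigma (a + b) * L.sigma (a + c)) =
      L.sigma (b + t) * L.sigma (c + t) * (L.sigma a * L.sigma (a + b + c)) -
        L.sigma (a + b + c + t) * L.sigma (a - t) * (L.sigma b * L.sigma c) := by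
  rw [EA_mem] at *
  rw [EA_sigma]; exact EA_key _ _ _ _ ha hbc habc t

theorem ea_chi (L : EllLattice) (a b c : ℂ) (ha : ¬ L.mem a) (hb : ¬ L.mem b) (hc : ¬ L.mem c)
    (hbc : ¬ L.mem (b + c)) (habc : ¬ L.mem (a + b + c)) :
    L.chi a b c =
    L.sigma (a + b) * L.sigma (b + c) * L.sigma (a + c) /
      (L.sigma a * L.sigma b * L.sigma c * L.sigma (a + b + c)) := by
  rw [EA_mem] at *
  unfold chi zeta
  rw [EA_sigma, ← EA_zeta _ _ _ _ ha hb hc hbc habc, show c + a + b = a + b + c by ring]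

end EllLattice

theorem EA_det2 {N : ℕ} (A : Matrix (Fin N) (Fin N) ℂ) (hA : IsUnit A.det)
    (a1 a2 c1 c2 : Fin N → ℂ) :
    (A - vecMulVec a1 c1 - vecMulVec a2 c2).det = A.det *
      ((1 - c1 ⬝ᵥ (A⁻¹ *ᵥ a1)) * (1 - c2 ⬝ᵥ (A⁻¹ *ᵥ a2)) -
        (c1 ⬝ᵥ (A⁻¹ *ᵥ a2)) * (c2 ⬝ᵥ (A⁻¹ *ᵥ a1))) := by
  have e : A - vecMulVec a1 c1 - vecMulVec a2 c2 =
      A + (Matrix.of ![a1, a2])ᵀ * (Matrix.of ![-c1, -c2]) := by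
    ext i j
    simp [vecMulVec_apply, Matrix.mul_apply, Fin.sum_univ_two]
    ring
  have h : (Matrix.of ![-c1, -c2]) * A⁻¹ * (Matrix.of ![a1, a2])ᵀ =
      !![-(c1 ⬝ᵥ (A⁻¹ *ᵥ a1)), -(c1 ⬝ᵥ (A⁻¹ *ᵥ a2)); -(c2 ⬝ᵥ (A⁻¹ *ᵥ a1)), -(c2 ⬝ᵥ (A⁻¹ *ᵥ a2))] := by
    rw [Matrix.mul_assoc]
    ext i j
    fin_cases i <;> fin_cases j <;>
      simp [Matrix.mul_apply, dotProduct, mulVec]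
  rw [e, Matrix.det_add_mul _ _ hA, h, Matrix.det_fin_two]
  simp
  left
  ring

theorem EA_det1 {N : ℕ} (A : Matrix (Fin N) (Fin N) ℂ) (hA : IsUnit A.det)
    (a c : Fin N → ℂ) :
    (A - vecMulVec a c).det = A.det * (1 - c ⬝ᵥ (A⁻¹ *ᵥ a)) := by
  have := EA_det2 A hA a 0 c 0
  simpa using this

theorem EA_mat {N : ℕ} (A : Matrix (Fin N) (Fin N) ℂ) (hA : IsUnit A.det)
    (a1 a2 c1 c2 : Fin N → ℂ) (k11 k12 k21 k22 K : ℂ) (h11 : k11 ≠ 0) (h12 : k12 ≠ 0)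
    (h21 : k21 ≠ 0) (h22 : k22 ≠ 0) (hK : K ≠ 0) (hKe : K = k22 - k12 * k21 / k11) :
    k11 * K * A.det * (A - vecMulVec (k11⁻¹ • a1) c1 -
        vecMulVec (K⁻¹ • (a2 - (k12 / k11) • a1)) (c2 - (k21 / k11) • c1)).det =
      k11 * k22 * (A - vecMulVec (k11⁻¹ • a1) c1).det * (A - vecMulVec (k22⁻¹ • a2) c2).det -
      k12 * k21 * (A - vecMulVec (k12⁻¹ • a2) c1).det * (A - vecMulVec (k21⁻¹ • a1) c2).det := by
  simp only [EA_det1 A hA, EA_det2 A hA, mulVec_smul, mulVec_sub, dotProduct_smul, sub_dotProduct,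
    dotProduct_sub, smul_dotProduct, smul_eq_mul]
  generalize c1 ⬝ᵥ (A⁻¹ *ᵥ a1) = g11
  generalize c1 ⬝ᵥ (A⁻¹ *ᵥ a2) = g12
  generalize c2 ⬝ᵥ (A⁻¹ *ᵥ a1) = g21
  generalize c2 ⬝ᵥ (A⁻¹ *ᵥ a2) = g22
  have e22 : k22 = K + k12 * k21 / k11 := by rw [hKe]; ring
  clear hKe
  field_simp at e22 ⊢
  linear_combination (-(A.det ^ 2 * k11 * (k11 - g11))) * e22

namespace EllLattice

/-- The kernel of the Cauchy matrix. -/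
def ea_phi (L : EllLattice) (ξ x y : ℂ) : ℂ := L.sigma (ξ + x + y) / (L.sigma (x + y) * L.sigma ξ)

theorem ea_schur (L : EllLattice) (ξ p q x y : ℂ) (h1 : ¬ L.mem (ξ + p - q))
    (h2 : ¬ L.mem (x + y - p + q)) (h3 : ¬ L.mem (ξ + x + y)) (h4 : ¬ L.mem ξ)
    (h5 : ¬ L.mem (x + y)) (h6 : ¬ L.mem (p - q)) (h7 : ¬ L.mem (q - x)) (h8 : ¬ L.mem (p + y)) :
    L.ea_phi (ξ + p - q) x y * (L.sigma (p - x) / L.sigma (q - x)) *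
      (L.sigma (q + y) / L.sigma (p + y)) =
    L.ea_phi ξ x y - L.ea_phi ξ x (-q) * L.ea_phi ξ p y / L.ea_phi ξ p (-q) := by
  have key := L.ea_key (ξ + p - q) (y + q) (x - p) (p - q) h1
    (by rwa [show y + q + (x - p) = x + y - p + q by ring])
    (by rwa [show ξ + p - q + (y + q) + (x - p) = ξ + x + y by ring])
  rw [show y + q + (x - p) + (p - q) = x + y by ring,
    show ξ + p - q + (y + q) = ξ + p + y by ring,
    show ξ + p - q + (x - p) = ξ + x - q by ring,
    show y + q + (p - q) = p + y by ring, show x - p + (p - q) = -(q - x) by ring,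
    show ξ + p + y + (x - p) = ξ + x + y by ring,
    show ξ + x + y + (p - q) = ξ + p - q + x + y by ring,
    show ξ + p - q - (p - q) = ξ by ring, show x - p = -(p - x) by ring, ea_neg, ea_neg,
    add_comm y q] at key
  have n1 := L.ea_ne h1
  have n3 := L.ea_ne h3
  have n4 := L.ea_ne h4
  have n5 := L.ea_ne h5
  have n6 := L.ea_ne h6
  have n7 := L.ea_ne h7
  have n8 := L.ea_ne h8
  unfold ea_phi
  rw [show x + -q = -(q - x) by ring, ea_neg, ← sub_eq_add_neg p q, ← sub_eq_add_neg (ξ + p) q,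
    ← sub_eq_add_neg (ξ + x) q]
  field_simp
  linear_combination -key
end EllLattice

namespace EllLattice

theorem ea_entry11 (L : EllLattice) (ξ δ ε l x y : ℂ)
    (H : ∀ c0 c1 c2 c3 c4 c5 : ℤ, ¬ (c0 = 0 ∧ c1 = 0 ∧ c2 = 0 ∧ c3 = 0 ∧ c4 = 0 ∧ c5 = 0) →
      ∀ {z : ℂ}, z = c0 * ξ + c1 * δ + c2 * ε + c3 * l + c4 * x + c5 * y → ¬ L.mem z) :
    L.ea_phi (ξ + δ) x y * (L.sigma (δ - x) / L.sigma (l - x)) *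
      (L.sigma (l + y) / L.sigma (δ + y)) =
    L.ea_phi (ξ + l) x y - L.ea_phi (ξ + l) x (-l) * L.ea_phi (ξ + l) δ y /
      L.ea_phi (ξ + l) δ (-l) := by
  have h := L.ea_schur (ξ+l) (δ) (l) (x) (y)
    (H 1 1 0 0 0 0 (by decide) (by push_cast; ring))
    (H 0 (-1) 0 1 1 1 (by decide) (by push_cast; ring))
    (H 1 0 0 1 1 1 (by decide) (by push_cast; ring))
    (H 1 0 0 1 0 0 (by decide) (by push_cast; ring))
    (H 0 0 0 0 1 1 (by decide) (by push_cast; ring))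
    (H 0 1 0 (-1) 0 0 (by decide) (by push_cast; ring))
    (H 0 0 0 1 (-1) 0 (by decide) (by push_cast; ring))
    (H 0 1 0 0 0 1 (by decide) (by push_cast; ring))
  rwa [show ξ + l + δ - l = ξ + δ by ring] at h

theorem ea_entry21 (L : EllLattice) (ξ δ ε l x y : ℂ)
    (H : ∀ c0 c1 c2 c3 c4 c5 : ℤ, ¬ (c0 = 0 ∧ c1 = 0 ∧ c2 = 0 ∧ c3 = 0 ∧ c4 = 0 ∧ c5 = 0) →
      ∀ {z : ℂ}, z = c0 * ξ + c1 * δ + c2 * ε + c3 * l + c4 * x + c5 * y → ¬ L.mem z) :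
    L.ea_phi (ξ + ε) x y * (L.sigma (ε - x) / L.sigma (l - x)) *
      (L.sigma (l + y) / L.sigma (ε + y)) =
    L.ea_phi (ξ + l) x y - L.ea_phi (ξ + l) x (-l) * L.ea_phi (ξ + l) ε y /
      L.ea_phi (ξ + l) ε (-l) := by
  have h := L.ea_schur (ξ+l) (ε) (l) (x) (y)
    (H 1 0 1 0 0 0 (by decide) (by push_cast; ring))
    (H 0 0 (-1) 1 1 1 (by decide) (by push_cast; ring))
    (H 1 0 0 1 1 1 (by decide) (by push_cast; ring))
    (H 1 0 0 1 0 0 (by decide) (by push_cast; ring))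
    (H 0 0 0 0 1 1 (by decide) (by push_cast; ring))
    (H 0 0 1 (-1) 0 0 (by decide) (by push_cast; ring))
    (H 0 0 0 1 (-1) 0 (by decide) (by push_cast; ring))
    (H 0 0 1 0 0 1 (by decide) (by push_cast; ring))
  rwa [show ξ + l + ε - l = ξ + ε by ring] at h

theorem ea_entry12 (L : EllLattice) (ξ δ ε l x y : ℂ)
    (H : ∀ c0 c1 c2 c3 c4 c5 : ℤ, ¬ (c0 = 0 ∧ c1 = 0 ∧ c2 = 0 ∧ c3 = 0 ∧ c4 = 0 ∧ c5 = 0) →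
      ∀ {z : ℂ}, z = c0 * ξ + c1 * δ + c2 * ε + c3 * l + c4 * x + c5 * y → ¬ L.mem z) :
    L.ea_phi (ξ + l + δ) x y * (L.sigma (δ - x) / L.sigma (0 - x)) *
      (L.sigma (0 + y) / L.sigma (δ + y)) =
    L.ea_phi (ξ + l) x y - L.ea_phi (ξ + l) x (-0) * L.ea_phi (ξ + l) δ y /
      L.ea_phi (ξ + l) δ (-0) := by
  have h := L.ea_schur (ξ+l) (δ) (0) (x) (y)
    (H 1 1 0 1 0 0 (by decide) (by push_cast; ring))
    (H 0 (-1) 0 0 1 1 (by decide) (by push_cast; ring))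
    (H 1 0 0 1 1 1 (by decide) (by push_cast; ring))
    (H 1 0 0 1 0 0 (by decide) (by push_cast; ring))
    (H 0 0 0 0 1 1 (by decide) (by push_cast; ring))
    (H 0 1 0 0 0 0 (by decide) (by push_cast; ring))
    (H 0 0 0 0 (-1) 0 (by decide) (by push_cast; ring))
    (H 0 1 0 0 0 1 (by decide) (by push_cast; ring))
  rwa [show ξ + l + δ - 0 = ξ + l + δ by ring] at h

theorem ea_entry22 (L : EllLattice) (ξ δ ε l x y : ℂ)
    (H : ∀ c0 c1 c2 c3 c4 c5 : ℤ, ¬ (c0 = 0 ∧ c1 = 0 ∧ c2 = 0 ∧ c3 = 0 ∧ c4 = 0 ∧ c5 = 0) →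
      ∀ {z : ℂ}, z = c0 * ξ + c1 * δ + c2 * ε + c3 * l + c4 * x + c5 * y → ¬ L.mem z) :
    L.ea_phi (ξ + l + ε) x y * (L.sigma (ε - x) / L.sigma (0 - x)) *
      (L.sigma (0 + y) / L.sigma (ε + y)) =
    L.ea_phi (ξ + l) x y - L.ea_phi (ξ + l) x (-0) * L.ea_phi (ξ + l) ε y /
      L.ea_phi (ξ + l) ε (-0) := by
  have h := L.ea_schur (ξ+l) (ε) (0) (x) (y)
    (H 1 0 1 1 0 0 (by decide) (by push_cast; ring))
    (H 0 0 (-1) 0 1 1 (by decide) (by push_cast; ring))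
    (H 1 0 0 1 1 1 (by decide) (by push_cast; ring))
    (H 1 0 0 1 0 0 (by decide) (by push_cast; ring))
    (H 0 0 0 0 1 1 (by decide) (by push_cast; ring))
    (H 0 0 1 0 0 0 (by decide) (by push_cast; ring))
    (H 0 0 0 0 (-1) 0 (by decide) (by push_cast; ring))
    (H 0 0 1 0 0 1 (by decide) (by push_cast; ring))
  rwa [show ξ + l + ε - 0 = ξ + l + ε by ring] at h

/-- The Schur complement kernel after the first step. -/
def ea_E (L : EllLattice) (ξ δ l x y : ℂ) : ℂ :=
  L.ea_phi (ξ + l) x y - L.ea_phi (ξ + l) x (-l) * L.ea_phi (ξ + l) δ y / L.ea_phi (ξ + l) δ (-l)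

theorem ea_E_eq (L : EllLattice) (ξ δ ε l : ℂ)
    (H : ∀ c0 c1 c2 c3 : ℤ, ¬ (c0 = 0 ∧ c1 = 0 ∧ c2 = 0 ∧ c3 = 0) →
      ∀ {z : ℂ}, z = c0 * ξ + c1 * δ + c2 * ε + c3 * l → ¬ L.mem z) :
    L.ea_phi (ξ + δ) ε (-0) * (L.sigma (δ - ε) / L.sigma (l - ε)) *
      (L.sigma (l + -0) / L.sigma (δ + -0)) = L.ea_E ξ δ l ε (-0) := by
  have h := L.ea_schur (ξ+l) (δ) (l) (ε) (-0)
    (H 1 1 0 0 (by decide) (by push_cast; ring))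
    (H 0 (-1) 1 1 (by decide) (by push_cast; ring))
    (H 1 0 1 1 (by decide) (by push_cast; ring))
    (H 1 0 0 1 (by decide) (by push_cast; ring))
    (H 0 0 1 0 (by decide) (by push_cast; ring))
    (H 0 1 0 (-1) (by decide) (by push_cast; ring))
    (H 0 0 (-1) 1 (by decide) (by push_cast; ring))
    (H 0 1 0 0 (by decide) (by push_cast; ring))
  rwa [show ξ + l + δ - l = ξ + δ by ring] at h

theorem ea_E_ne (L : EllLattice) (ξ δ ε l : ℂ)
    (H : ∀ c0 c1 c2 c3 : ℤ, ¬ (c0 = 0 ∧ c1 = 0 ∧ c2 = 0 ∧ c3 = 0) →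
      ∀ {z : ℂ}, z = c0 * ξ + c1 * δ + c2 * ε + c3 * l → ¬ L.mem z) :
    L.ea_E ξ δ l ε (-0) ≠ 0 := by
  rw [← ea_E_eq L ξ δ ε l H]
  unfold ea_phi
  refine mul_ne_zero (mul_ne_zero (div_ne_zero ?_ (mul_ne_zero ?_ ?_)) (div_ne_zero ?_ ?_))
    (div_ne_zero ?_ ?_) <;> apply L.ea_ne
  · exact H 1 1 1 0 (by decide) (by push_cast; ring)
  · exact H 0 0 1 0 (by decide) (by push_cast; ring)
  · exact H 1 1 0 0 (by decide) (by push_cast; ring)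
  · exact H 0 1 (-1) 0 (by decide) (by push_cast; ring)
  · exact H 0 0 (-1) 1 (by decide) (by push_cast; ring)
  · exact H 0 0 0 1 (by decide) (by push_cast; ring)
  · exact H 0 1 0 0 (by decide) (by push_cast; ring)

theorem ea_entry2 (L : EllLattice) (ξ δ ε l x y : ℂ)
    (H : ∀ c0 c1 c2 c3 c4 c5 : ℤ, ¬ (c0 = 0 ∧ c1 = 0 ∧ c2 = 0 ∧ c3 = 0 ∧ c4 = 0 ∧ c5 = 0) →
      ∀ {z : ℂ}, z = c0 * ξ + c1 * δ + c2 * ε + c3 * l + c4 * x + c5 * y → ¬ L.mem z) :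
    L.ea_phi (ξ + δ + ε) x y * (L.sigma (δ - x) / L.sigma (l - x)) *
      (L.sigma (l + y) / L.sigma (δ + y)) * (L.sigma (ε - x) / L.sigma (0 - x)) *
      (L.sigma (0 + y) / L.sigma (ε + y)) =
    L.ea_E ξ δ l x y - L.ea_E ξ δ l x (-0) * L.ea_E ξ δ l ε y / L.ea_E ξ δ l ε (-0) := by
  have h4 : ∀ c0 c1 c2 c3 : ℤ, ¬ (c0 = 0 ∧ c1 = 0 ∧ c2 = 0 ∧ c3 = 0) →
      ∀ {z : ℂ}, z = c0 * ξ + c1 * δ + c2 * ε + c3 * l → ¬ L.mem z := by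
    intro c0 c1 c2 c3 hc z hz
    exact H c0 c1 c2 c3 0 0 (fun h => hc ⟨h.1, h.2.1, h.2.2.1, h.2.2.2.1⟩) (by rw [hz]; push_cast; ring)
  have e1 := L.ea_entry11 ξ δ ε l x y H
  have e2 := L.ea_schur (ξ+l) (δ) (l) (x) (-0)
    (H 1 1 0 0 0 0 (by decide) (by push_cast; ring))
    (H 0 (-1) 0 1 1 0 (by decide) (by push_cast; ring))
    (H 1 0 0 1 1 0 (by decide) (by push_cast; ring))
    (H 1 0 0 1 0 0 (by decide) (by push_cast; ring))
    (H 0 0 0 0 1 0 (by decide) (by push_cast; ring))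
    (H 0 1 0 (-1) 0 0 (by decide) (by push_cast; ring))
    (H 0 0 0 1 (-1) 0 (by decide) (by push_cast; ring))
    (H 0 1 0 0 0 0 (by decide) (by push_cast; ring))
  have e3 := L.ea_schur (ξ+l) (δ) (l) (ε) (y)
    (H 1 1 0 0 0 0 (by decide) (by push_cast; ring))
    (H 0 (-1) 1 1 0 1 (by decide) (by push_cast; ring))
    (H 1 0 1 1 0 1 (by decide) (by push_cast; ring))
    (H 1 0 0 1 0 0 (by decide) (by push_cast; ring))
    (H 0 0 1 0 0 1 (by decide) (by push_cast; ring))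
    (H 0 1 0 (-1) 0 0 (by decide) (by push_cast; ring))
    (H 0 0 (-1) 1 0 0 (by decide) (by push_cast; ring))
    (H 0 1 0 0 0 1 (by decide) (by push_cast; ring))
  rw [show ξ + l + δ - l = ξ + δ by ring] at e2 e3
  have e4 := ea_E_eq L ξ δ ε l h4
  have h := L.ea_schur (ξ+δ) (ε) (0) (x) (y)
    (H 1 1 1 0 0 0 (by decide) (by push_cast; ring))
    (H 0 0 (-1) 0 1 1 (by decide) (by push_cast; ring))
    (H 1 1 0 0 1 1 (by decide) (by push_cast; ring))
    (H 1 1 0 0 0 0 (by decide) (by push_cast; ring))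
    (H 0 0 0 0 1 1 (by decide) (by push_cast; ring))
    (H 0 0 1 0 0 0 (by decide) (by push_cast; ring))
    (H 0 0 0 0 (-1) 0 (by decide) (by push_cast; ring))
    (H 0 0 1 0 0 1 (by decide) (by push_cast; ring))
  rw [show ξ + δ + ε - 0 = ξ + δ + ε by ring] at h
  rw [← e4]
  simp only [ea_E]
  rw [← e1, ← e2, ← e3]
  have n2 : L.sigma (δ - ε) ≠ 0 := L.ea_ne (H 0 1 (-1) 0 0 0 (by decide) (by push_cast; ring))
  have n3 : L.sigma (l - ε) ≠ 0 := L.ea_ne (H 0 0 (-1) 1 0 0 (by decide) (by push_cast; ring))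
  have n4 : L.sigma (l + -0) ≠ 0 := L.ea_ne (H 0 0 0 1 0 0 (by decide) (by push_cast; ring))
  have n5 : L.sigma (δ + -0) ≠ 0 := L.ea_ne (H 0 1 0 0 0 0 (by decide) (by push_cast; ring))
  have hr : L.ea_phi (ξ + δ + ε) x y * (L.sigma (δ - x) / L.sigma (l - x)) *
      (L.sigma (l + y) / L.sigma (δ + y)) * (L.sigma (ε - x) / L.sigma (0 - x)) *
      (L.sigma (0 + y) / L.sigma (ε + y)) = (L.sigma (δ - x) / L.sigma (l - x)) *
      (L.sigma (l + y) / L.sigma (δ + y)) * (L.ea_phi (ξ + δ + ε) x y *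
        (L.sigma (ε - x) / L.sigma (0 - x)) * (L.sigma (0 + y) / L.sigma (ε + y))) := by ring
  rw [hr, h]
  generalize L.sigma (δ - x) / L.sigma (l - x) = f1
  generalize L.sigma (l + y) / L.sigma (δ + y) = g1
  have m1 : L.sigma (δ - ε) / L.sigma (l - ε) ≠ 0 := div_ne_zero n2 n3
  have m2 : L.sigma (l + -0) / L.sigma (δ + -0) ≠ 0 := div_ne_zero n4 n5
  revert m1 m2
  generalize L.sigma (δ - ε) / L.sigma (l - ε) = f2
  generalize L.sigma (l + -0) / L.sigma (δ + -0) = g2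
  intro m1 m2
  rw [mul_sub]
  congr 1
  · ring
  · rw [show L.ea_phi (ξ + δ) x (-0) * f1 * g2 * (L.ea_phi (ξ + δ) ε y * f2 * g1) =
      (L.ea_phi (ξ + δ) x (-0) * L.ea_phi (ξ + δ) ε y * f1 * g1) * (f2 * g2) by ring,
      show L.ea_phi (ξ + δ) ε (-0) * f2 * g2 = L.ea_phi (ξ + δ) ε (-0) * (f2 * g2) by ring,
      mul_div_mul_right _ _ (mul_ne_zero m1 m2)]
    ring

end EllLattice

namespace KPData

variable {N N' : ℕ}

/-- Row gauge factor. -/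
def ea_X (D : KPData N N') (i : Fin N) (n m h : ℤ) : ℂ :=
  D.L.Phi D.del (-(D.κ i)) ^ n * D.L.Phi D.eps (-(D.κ i)) ^ m * D.L.Phi D.lam (-(D.κ i)) ^ h * D.ρ0 i

/-- Column gauge factor. -/
def ea_Y (D : KPData N N') (j : Fin N') (n m h : ℤ) : ℂ :=
  D.L.Phi D.del (D.κ' j) ^ (-n) * D.L.Phi D.eps (D.κ' j) ^ (-m) * D.L.Phi D.lam (D.κ' j) ^ (-h) *
    D.ν0 j

theorem ea_M (D : KPData N N') (n m h : ℤ) (i : Fin N) (j : Fin N') :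
    D.M n m h i j = D.ea_X i n m h * D.ea_Y j n m h * D.L.ea_phi (D.xi n m h) (D.κ i) (D.κ' j) := by
  have e1 : ∀ s k : ℂ, Complex.exp (-(D.L.zeta s) * k) * D.L.Psi s (-k) = D.L.Phi s (-k) := by
    intro s k
    unfold EllLattice.Psi
    rw [mul_left_comm, ← Complex.exp_add]
    simp
  have e2 : ∀ s k : ℂ, Complex.exp (D.L.zeta s * k) * D.L.Psi s k = D.L.Phi s k := by
    intro s k
    unfold EllLattice.Psi
    rw [mul_left_comm, ← Complex.exp_add]
    simp
  have e3 : D.L.ea_phi (D.xi n m h) (D.κ i) (D.κ' j) =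
      Complex.exp (D.L.zeta (D.xi n m h) * D.κ i) * Complex.exp (D.L.zeta (D.xi n m h) * D.κ' j) *
        D.L.Psi (D.xi n m h) (D.κ i + D.κ' j) := by
    rw [← Complex.exp_add, ← mul_add, e2, EllLattice.ea_phi, EllLattice.Phi, add_assoc,
      mul_comm (D.L.sigma (D.xi n m h))]
  rw [e3]
  simp only [M, Matrix.of_apply, ρ, ν, e1, e2, ea_X, ea_Y]
  ring

theorem ea_gen (D : KPData N N') (hgen : D.Generic ![]) (n m h : ℤ)
    (c0 c1 c2 c3 : ℤ) (hc : ¬ (c0 = 0 ∧ c1 = 0 ∧ c2 = 0 ∧ c3 = 0)) {z : ℂ}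
    (hz : z = c0 * D.xi n m h + c1 * D.del + c2 * D.eps + c3 * D.lam) : ¬ D.L.mem z := by
  have := hgen c0 (c0 * n + c1) (c0 * m + c2) (c0 * h + c3) 0 0 0 (by
    rintro ⟨h0, h1, h2, h3, -⟩
    subst h0
    simp only [zero_mul, zero_add] at h1 h2 h3
    exact hc ⟨rfl, h1, h2, h3⟩)
  convert this using 2
  rw [hz]
  simp [xi]
  ring

theorem ea_gen6 (D : KPData N N') (hgen : D.Generic ![]) (n m h : ℤ) (i : Fin N) (j : Fin N')
    (c0 c1 c2 c3 c4 c5 : ℤ)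
    (hc : ¬ (c0 = 0 ∧ c1 = 0 ∧ c2 = 0 ∧ c3 = 0 ∧ c4 = 0 ∧ c5 = 0)) {z : ℂ}
    (hz : z = c0 * D.xi n m h + c1 * D.del + c2 * D.eps + c3 * D.lam + c4 * D.κ i + c5 * D.κ' j) :
    ¬ D.L.mem z := by
  have := hgen c0 (c0 * n + c1) (c0 * m + c2) (c0 * h + c3) (Pi.single i c4) (Pi.single j c5) 0 (by
    rintro ⟨h0, h1, h2, h3, h4, h5, -⟩
    subst h0
    simp only [zero_mul, zero_add] at h1 h2 h3
    rw [Pi.single_eq_zero_iff] at h4 h5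
    exact hc ⟨rfl, h1, h2, h3, h4, h5⟩)
  convert this using 2
  rw [hz]
  simp [xi, Pi.single_apply]
  ring

/-- Step ratio. -/
theorem ea_ratio (L : EllLattice) (s x y : ℂ) (h1 : L.sigma s ≠ 0) (h2 : L.sigma x ≠ 0)
    (h3 : L.sigma y ≠ 0) (h4 : L.sigma (s + y) ≠ 0) :
    L.Phi s (-x) / L.Phi s y = (L.sigma (s - x) / L.sigma (0 - x)) * (L.sigma (0 + y) / L.sigma (s + y)) := by
  unfold EllLattice.Phi
  rw [zero_sub, zero_add, EllLattice.ea_neg, ← sub_eq_add_neg]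
  field_simp

theorem ea_steps (D : KPData N N') (hgen : D.Generic ![]) (n m h : ℤ) (i : Fin N) (j : Fin N') :
    let B := D.ea_X i n m (h + 1) * D.ea_Y j n m (h + 1)
    let r := fun p q : ℂ => (D.L.sigma (p - D.κ i) / D.L.sigma (q - D.κ i)) *
      (D.L.sigma (q + D.κ' j) / D.L.sigma (p + D.κ' j))
    D.ea_X i (n + 1) m h * D.ea_Y j (n + 1) m h = B * r D.del D.lam ∧
    D.ea_X i n (m + 1) h * D.ea_Y j n (m + 1) h = B * r D.eps D.lam ∧
    D.ea_X i (n + 1) m (h + 1) * D.ea_Y j (n + 1) m (h + 1) = B * r D.del 0 ∧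
    D.ea_X i n (m + 1) (h + 1) * D.ea_Y j n (m + 1) (h + 1) = B * r D.eps 0 ∧
    D.ea_X i (n + 1) (m + 1) h * D.ea_Y j (n + 1) (m + 1) h =
      B * r D.del D.lam * r D.eps 0 := by
  intro B r
  have G := D.ea_gen6 hgen n m h i j
  have nx : D.L.sigma (D.κ i) ≠ 0 := D.L.ea_ne (G 0 0 0 0 1 0 (by decide) (by push_cast; ring))
  have ny : D.L.sigma (D.κ' j) ≠ 0 := D.L.ea_ne (G 0 0 0 0 0 1 (by decide) (by push_cast; ring))
  have nx' : D.L.sigma (-(D.κ i)) ≠ 0 := by rw [EllLattice.ea_neg]; exact neg_ne_zero.mpr nx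
  have nd : D.L.sigma D.del ≠ 0 := D.L.ea_ne (G 0 1 0 0 0 0 (by decide) (by push_cast; ring))
  have ne : D.L.sigma D.eps ≠ 0 := D.L.ea_ne (G 0 0 1 0 0 0 (by decide) (by push_cast; ring))
  have nl : D.L.sigma D.lam ≠ 0 := D.L.ea_ne (G 0 0 0 1 0 0 (by decide) (by push_cast; ring))
  have ndy : D.L.sigma (D.del + D.κ' j) ≠ 0 := D.L.ea_ne (G 0 1 0 0 0 1 (by decide) (by push_cast; ring))
  have ney : D.L.sigma (D.eps + D.κ' j) ≠ 0 := D.L.ea_ne (G 0 0 1 0 0 1 (by decide) (by push_cast; ring))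
  have nly : D.L.sigma (D.lam + D.κ' j) ≠ 0 := D.L.ea_ne (G 0 0 0 1 0 1 (by decide) (by push_cast; ring))
  have ndx : D.L.sigma (D.del + -D.κ i) ≠ 0 := D.L.ea_ne (G 0 1 0 0 (-1) 0 (by decide) (by push_cast; ring))
  have nex : D.L.sigma (D.eps + -D.κ i) ≠ 0 := D.L.ea_ne (G 0 0 1 0 (-1) 0 (by decide) (by push_cast; ring))
  have nlx : D.L.sigma (D.lam + -D.κ i) ≠ 0 := D.L.ea_ne (G 0 0 0 1 (-1) 0 (by decide) (by push_cast; ring))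
  have pd : D.L.Phi D.del (-(D.κ i)) ≠ 0 := div_ne_zero ndx (mul_ne_zero nd nx')
  have pe : D.L.Phi D.eps (-(D.κ i)) ≠ 0 := div_ne_zero nex (mul_ne_zero ne nx')
  have pl : D.L.Phi D.lam (-(D.κ i)) ≠ 0 := div_ne_zero nlx (mul_ne_zero nl nx')
  have pd' : D.L.Phi D.del (D.κ' j) ≠ 0 := div_ne_zero ndy (mul_ne_zero nd ny)
  have pe' : D.L.Phi D.eps (D.κ' j) ≠ 0 := div_ne_zero ney (mul_ne_zero ne ny)
  have pl' : D.L.Phi D.lam (D.κ' j) ≠ 0 := div_ne_zero nly (mul_ne_zero nl ny)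
  have rd := ea_ratio D.L D.del (D.κ i) (D.κ' j) nd nx ny ndy
  have re := ea_ratio D.L D.eps (D.κ i) (D.κ' j) ne nx ny ney
  have rl := ea_ratio D.L D.lam (D.κ i) (D.κ' j) nl nx ny nly
  have qd : r D.del 0 = D.L.Phi D.del (-(D.κ i)) / D.L.Phi D.del (D.κ' j) := rd.symm
  have qe : r D.eps 0 = D.L.Phi D.eps (-(D.κ i)) / D.L.Phi D.eps (D.κ' j) := re.symm
  have ql : r D.lam 0 = D.L.Phi D.lam (-(D.κ i)) / D.L.Phi D.lam (D.κ' j) := rl.symm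
  have hql : r D.lam 0 ≠ 0 := by rw [ql]; exact div_ne_zero pl pl'
  have tr : ∀ p, r p D.lam = r p 0 / r D.lam 0 := by
    intro p
    simp only [r, zero_sub, zero_add]
    rw [← sub_eq_add_neg] at nlx
    field_simp
  have sd : ∀ n m h, D.ea_X i (n + 1) m h * D.ea_Y j (n + 1) m h =
      D.ea_X i n m h * D.ea_Y j n m h * r D.del 0 := by
    intro n m h
    simp only [ea_X, ea_Y, qd, _root_.zpow_neg, zpow_add_one₀ pd, zpow_add_one₀ pd']
    ring
  have se : ∀ n m h, D.ea_X i n (m + 1) h * D.ea_Y j n (m + 1) h =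
      D.ea_X i n m h * D.ea_Y j n m h * r D.eps 0 := by
    intro n m h
    simp only [ea_X, ea_Y, qe, _root_.zpow_neg, zpow_add_one₀ pe, zpow_add_one₀ pe']
    ring
  have sl : B = D.ea_X i n m h * D.ea_Y j n m h * r D.lam 0 := by
    simp only [B, ea_X, ea_Y, ql, _root_.zpow_neg, zpow_add_one₀ pl, zpow_add_one₀ pl']
    ring
  refine ⟨?_, ?_, ?_, ?_, ?_⟩
  · rw [sd, tr, sl]; field_simp
  · rw [se, tr, sl]; field_simp
  · rw [sd]
  · rw [se]
  · rw [sd, se, tr, sl]; field_simp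

end KPData

namespace EllLattice

theorem ea_coeffs (L : EllLattice) (ξ δ ε l : ℂ)
    (H : ∀ c0 c1 c2 c3 : ℤ, ¬ (c0 = 0 ∧ c1 = 0 ∧ c2 = 0 ∧ c3 = 0) →
      ∀ {z : ℂ}, z = c0 * ξ + c1 * δ + c2 * ε + c3 * l → ¬ L.mem z) :
    let φ := L.ea_phi (ξ + l)
    let K := φ δ (-l) * L.ea_E ξ δ l ε (-0)
    φ δ (-l) ≠ 0 ∧ φ δ (-0) ≠ 0 ∧ φ ε (-l) ≠ 0 ∧ φ ε (-0) ≠ 0 ∧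
    L.chi (-l) ε (ξ + l) * K = L.chi (-δ) ε (ξ + δ) * (φ δ (-l) * φ ε (-0)) ∧
    L.chi (-δ) l (ξ + δ) * K = - (L.chi (-δ) ε (ξ + δ) * (φ δ (-0) * φ ε (-l))) := by
  intro φ K
  have s1 : ξ + l + δ + -l = ξ + δ := by ring
  have s2 : ξ + l + ε + -l = ξ + ε := by ring
  have n0 : L.sigma ξ ≠ 0 := L.ea_ne (H 1 0 0 0 (by decide) (by push_cast; ring))
  have nd : L.sigma δ ≠ 0 := L.ea_ne (H 0 1 0 0 (by decide) (by push_cast; ring))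
  have ne : L.sigma ε ≠ 0 := L.ea_ne (H 0 0 1 0 (by decide) (by push_cast; ring))
  have nl : L.sigma l ≠ 0 := L.ea_ne (H 0 0 0 1 (by decide) (by push_cast; ring))
  have nde : L.sigma (δ - ε) ≠ 0 := L.ea_ne (H 0 1 (-1) 0 (by decide) (by push_cast; ring))
  have ndl : L.sigma (δ - l) ≠ 0 := L.ea_ne (H 0 1 0 (-1) (by decide) (by push_cast; ring))
  have nel : L.sigma (ε - l) ≠ 0 := L.ea_ne (H 0 0 1 (-1) (by decide) (by push_cast; ring))
  have xd : L.sigma (ξ + δ) ≠ 0 := L.ea_ne (H 1 1 0 0 (by decide) (by push_cast; ring))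
  have xe : L.sigma (ξ + ε) ≠ 0 := L.ea_ne (H 1 0 1 0 (by decide) (by push_cast; ring))
  have xl : L.sigma (ξ + l) ≠ 0 := L.ea_ne (H 1 0 0 1 (by decide) (by push_cast; ring))
  have xde : L.sigma (ξ + δ + ε) ≠ 0 := L.ea_ne (H 1 1 1 0 (by decide) (by push_cast; ring))
  have xdl : L.sigma (ξ + l + δ) ≠ 0 := L.ea_ne (H 1 1 0 1 (by decide) (by push_cast; ring))
  have xel : L.sigma (ξ + l + ε) ≠ 0 := L.ea_ne (H 1 0 1 1 (by decide) (by push_cast; ring))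
  have p1 : φ δ (-l) = L.sigma (ξ + δ) / (L.sigma (δ - l) * L.sigma (ξ + l)) := by
    simp only [φ, ea_phi, s1, ← sub_eq_add_neg δ l]
  have p2 : φ ε (-l) = L.sigma (ξ + ε) / (L.sigma (ε - l) * L.sigma (ξ + l)) := by
    simp only [φ, ea_phi, s2, ← sub_eq_add_neg ε l]
  have p3 : φ δ (-0) = L.sigma (ξ + l + δ) / (L.sigma δ * L.sigma (ξ + l)) := by
    simp only [φ, ea_phi, neg_zero, add_zero]
  have p4 : φ ε (-0) = L.sigma (ξ + l + ε) / (L.sigma ε * L.sigma (ξ + l)) := by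
    simp only [φ, ea_phi, neg_zero, add_zero]
  have pE : L.ea_E ξ δ l ε (-0) = L.sigma (ξ + δ + ε) / (L.sigma ε * L.sigma (ξ + δ)) *
      (L.sigma (δ - ε) / -L.sigma (ε - l)) * (L.sigma l / L.sigma δ) := by
    rw [← ea_E_eq L ξ δ ε l H, show l - ε = -(ε - l) by ring, ea_neg]
    simp only [ea_phi, neg_zero, add_zero]
  have c1 : L.chi (-δ) ε (ξ + δ) = L.sigma (δ - ε) * L.sigma (ξ + δ + ε) * L.sigma ξ /
      (L.sigma δ * L.sigma ε * L.sigma (ξ + δ) * L.sigma (ξ + ε)) := by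
    rw [ea_chi L (-δ) ε (ξ + δ) (H 0 (-1) 0 0 (by decide) (by push_cast; ring))
      (H 0 0 1 0 (by decide) (by push_cast; ring)) (H 1 1 0 0 (by decide) (by push_cast; ring))
      (H 1 1 1 0 (by decide) (by push_cast; ring)) (H 1 0 1 0 (by decide) (by push_cast; ring)),
      show -δ + ε = -(δ - ε) by ring, show -(δ - ε) + (ξ + δ) = ξ + ε by ring,
      show ε + (ξ + δ) = ξ + δ + ε by ring, show -δ + (ξ + δ) = ξ by ring, ea_neg, ea_neg]
    field_simp
  have c2 : L.chi (-l) ε (ξ + l) = - (L.sigma (ε - l) * L.sigma (ξ + l + ε) * L.sigma ξ) /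
      (L.sigma l * L.sigma ε * L.sigma (ξ + l) * L.sigma (ξ + ε)) := by
    rw [ea_chi L (-l) ε (ξ + l) (H 0 0 0 (-1) (by decide) (by push_cast; ring))
      (H 0 0 1 0 (by decide) (by push_cast; ring)) (H 1 0 0 1 (by decide) (by push_cast; ring))
      (H 1 0 1 1 (by decide) (by push_cast; ring)) (H 1 0 1 0 (by decide) (by push_cast; ring)),
      show -l + ε = ε - l by ring, show ε - l + (ξ + l) = ξ + ε by ring,
      show ε + (ξ + l) = ξ + l + ε by ring, show -l + (ξ + l) = ξ by ring, ea_neg]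
    field_simp
  have c3 : L.chi (-δ) l (ξ + δ) = L.sigma (δ - l) * L.sigma (ξ + l + δ) * L.sigma ξ /
      (L.sigma δ * L.sigma l * L.sigma (ξ + δ) * L.sigma (ξ + l)) := by
    rw [ea_chi L (-δ) l (ξ + δ) (H 0 (-1) 0 0 (by decide) (by push_cast; ring))
      (H 0 0 0 1 (by decide) (by push_cast; ring)) (H 1 1 0 0 (by decide) (by push_cast; ring))
      (H 1 1 0 1 (by decide) (by push_cast; ring)) (H 1 0 0 1 (by decide) (by push_cast; ring)),
      show -δ + l = -(δ - l) by ring, show -(δ - l) + (ξ + δ) = ξ + l by ring,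
      show l + (ξ + δ) = ξ + l + δ by ring, show -δ + (ξ + δ) = ξ by ring, ea_neg, ea_neg]
    field_simp
  refine ⟨?_, ?_, ?_, ?_, ?_, ?_⟩
  · rw [p1]; positivity
  · rw [p3]; positivity
  · rw [p2]; positivity
  · rw [p4]; positivity
  · simp only [K]
    rw [p1, p4, pE, c1, c2]
    field_simp
  · simp only [K]
    rw [p1, p2, p3, pE, c1, c3]
    field_simp

end EllLattice

/-- Elliptic soliton solution of Hirota's bilinear discrete KP equation (DAGTE):
`χ_{−δ,ε}(ξ+δ)·τ̄·τ̂̃ = χ_{−λ,ε}(ξ+λ)·τ̃·τ̂̄ + χ_{−δ,λ}(ξ+δ)·τ̂·τ̃̄`. -/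
theorem elliptic_soliton_hirota_DAGTE {N N' : ℕ} (D : KPData N N')
    (hρ0 : ∀ i, D.ρ0 i ≠ 0) (hν0 : ∀ j, D.ν0 j ≠ 0)
    (hgen : D.Generic ![])
    (hInv : ∀ n m h : ℤ, IsUnit ((1 + D.M n m h * D.C).det)) :
    ∀ n m h : ℤ,
      D.L.chi (-D.del) D.eps (D.xi (n + 1) m h) * D.τ n m (h + 1) *
          D.τ (n + 1) (m + 1) h =
        D.L.chi (-D.lam) D.eps (D.xi n m (h + 1)) * D.τ (n + 1) m h *
            D.τ n (m + 1) (h + 1) +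
          D.L.chi (-D.del) D.lam (D.xi (n + 1) m h) * D.τ n (m + 1) h *
            D.τ (n + 1) m (h + 1) := by
  intro n m h
  have G := D.ea_gen hgen n m h
  have G6 := D.ea_gen6 hgen n m h
  have x1 : D.xi (n + 1) m h = D.xi n m h + D.del := by
    simp [KPData.xi]; ring
  have x2 : D.xi n (m + 1) h = D.xi n m h + D.eps := by
    simp [KPData.xi]; ring
  have x3 : D.xi n m (h + 1) = D.xi n m h + D.lam := by
    simp [KPData.xi]; ring
  have x12 : D.xi (n + 1) (m + 1) h = D.xi n m h + D.del + D.eps := by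
    simp [KPData.xi]; ring
  have x13 : D.xi (n + 1) m (h + 1) = D.xi n m h + D.lam + D.del := by
    simp [KPData.xi]; ring
  have x23 : D.xi n (m + 1) (h + 1) = D.xi n m h + D.lam + D.eps := by
    simp [KPData.xi]; ring
  have hco := D.L.ea_coeffs (D.xi n m h) D.del D.eps D.lam G
  have hK := D.L.ea_E_ne (D.xi n m h) D.del D.eps D.lam G
  set ξ := D.xi n m h with hξ
  set φ := D.L.ea_phi (ξ + D.lam) with hφ
  simp only at hco
  obtain ⟨k11, k12, k21, k22, r2, r3⟩ := hco
  let a1 : Fin N → ℂ := fun i => D.ea_X i n m (h + 1) * φ (D.κ i) (-D.lam)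
  let a2 : Fin N → ℂ := fun i => D.ea_X i n m (h + 1) * φ (D.κ i) (-0)
  let b1 : Fin N' → ℂ := fun j => D.ea_Y j n m (h + 1) * φ D.del (D.κ' j)
  let b2 : Fin N' → ℂ := fun j => D.ea_Y j n m (h + 1) * φ D.eps (D.κ' j)
  have m11 : D.M (n + 1) m h = D.M n m (h + 1) - vecMulVec ((φ D.del (-D.lam))⁻¹ • a1) b1 := by
    ext i j
    have e := D.L.ea_entry11 ξ D.del D.eps D.lam (D.κ i) (D.κ' j) (G6 i j)
    have s := (D.ea_steps hgen n m h i j).1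
    rw [← hφ] at e
    simp only [Matrix.sub_apply, vecMulVec_apply, Pi.smul_apply, smul_eq_mul, a1, b1, D.ea_M, x1, x3,
      ← hφ]
    rw [s]
    linear_combination (D.ea_X i n m (h + 1) * D.ea_Y j n m (h + 1)) * e
  have m21 : D.M n (m + 1) h = D.M n m (h + 1) - vecMulVec ((φ D.eps (-D.lam))⁻¹ • a1) b2 := by
    ext i j
    have e := D.L.ea_entry21 ξ D.del D.eps D.lam (D.κ i) (D.κ' j) (G6 i j)
    have s := (D.ea_steps hgen n m h i j).2.1
    rw [← hφ] at e
    simp only [Matrix.sub_apply, vecMulVec_apply, Pi.smul_apply, smul_eq_mul, a1, b2, D.ea_M, x2, x3,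
      ← hφ]
    rw [s]
    linear_combination (D.ea_X i n m (h + 1) * D.ea_Y j n m (h + 1)) * e
  have m12 : D.M (n + 1) m (h + 1) = D.M n m (h + 1) - vecMulVec ((φ D.del (-0))⁻¹ • a2) b1 := by
    ext i j
    have e := D.L.ea_entry12 ξ D.del D.eps D.lam (D.κ i) (D.κ' j) (G6 i j)
    have s := (D.ea_steps hgen n m h i j).2.2.1
    rw [← hφ] at e
    simp only [Matrix.sub_apply, vecMulVec_apply, Pi.smul_apply, smul_eq_mul, a2, b1, D.ea_M, x13, x3,
      ← hφ]
    rw [s]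
    linear_combination (D.ea_X i n m (h + 1) * D.ea_Y j n m (h + 1)) * e
  have m22 : D.M n (m + 1) (h + 1) = D.M n m (h + 1) - vecMulVec ((φ D.eps (-0))⁻¹ • a2) b2 := by
    ext i j
    have e := D.L.ea_entry22 ξ D.del D.eps D.lam (D.κ i) (D.κ' j) (G6 i j)
    have s := (D.ea_steps hgen n m h i j).2.2.2.1
    rw [← hφ] at e
    simp only [Matrix.sub_apply, vecMulVec_apply, Pi.smul_apply, smul_eq_mul, a2, b2, D.ea_M, x23, x3,
      ← hφ]
    rw [s]
    linear_combination (D.ea_X i n m (h + 1) * D.ea_Y j n m (h + 1)) * e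
  have mm : D.M (n + 1) (m + 1) h = D.M n m (h + 1) - vecMulVec ((φ D.del (-D.lam))⁻¹ • a1) b1 -
      vecMulVec ((D.L.ea_E ξ D.del D.lam D.eps (-0))⁻¹ •
        (a2 - (φ D.del (-0) / φ D.del (-D.lam)) • a1))
        (b2 - (φ D.eps (-D.lam) / φ D.del (-D.lam)) • b1) := by
    ext i j
    have e := D.L.ea_entry2 ξ D.del D.eps D.lam (D.κ i) (D.κ' j) (G6 i j)
    have s := (D.ea_steps hgen n m h i j).2.2.2.2
    have E1 : ∀ x y, D.L.ea_E ξ D.del D.lam x y =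
      φ x y - φ x (-D.lam) * φ D.del y / φ D.del (-D.lam) := fun x y => rfl
    rw [E1 (D.κ i) (D.κ' j), E1 (D.κ i) (-0), E1 D.eps (D.κ' j)] at e
    simp only [Matrix.sub_apply, vecMulVec_apply, Pi.smul_apply, Pi.sub_apply, smul_eq_mul, a1, a2,
      b1, b2, D.ea_M, x12, x3, ← hφ]
    rw [s]
    linear_combination (D.ea_X i n m (h + 1) * D.ea_Y j n m (h + 1)) * e
  have main := EA_mat (1 + D.M n m (h + 1) * D.C) (hInv n m (h + 1)) a1 a2 (b1 ᵥ* D.C) (b2 ᵥ* D.C)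
    (φ D.del (-D.lam)) (φ D.del (-0)) (φ D.eps (-D.lam)) (φ D.eps (-0))
    (D.L.ea_E ξ D.del D.lam D.eps (-0)) k11 k12 k21 k22 hK (by
      simp only [EllLattice.ea_E, ← hφ]; ring)
  have t11 : D.τ (n + 1) m h = (1 + D.M n m (h + 1) * D.C -
      vecMulVec ((φ D.del (-D.lam))⁻¹ • a1) (b1 ᵥ* D.C)).det := by
    rw [KPData.τ, m11, Matrix.sub_mul, vecMulVec_mul, add_sub_assoc]
  have t21 : D.τ n (m + 1) h = (1 + D.M n m (h + 1) * D.C -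
      vecMulVec ((φ D.eps (-D.lam))⁻¹ • a1) (b2 ᵥ* D.C)).det := by
    rw [KPData.τ, m21, Matrix.sub_mul, vecMulVec_mul, add_sub_assoc]
  have t12 : D.τ (n + 1) m (h + 1) = (1 + D.M n m (h + 1) * D.C -
      vecMulVec ((φ D.del (-0))⁻¹ • a2) (b1 ᵥ* D.C)).det := by
    rw [KPData.τ, m12, Matrix.sub_mul, vecMulVec_mul, add_sub_assoc]
  have t22 : D.τ n (m + 1) (h + 1) = (1 + D.M n m (h + 1) * D.C -
      vecMulVec ((φ D.eps (-0))⁻¹ • a2) (b2 ᵥ* D.C)).det := by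
    rw [KPData.τ, m22, Matrix.sub_mul, vecMulVec_mul, add_sub_assoc]
  have tt : D.τ (n + 1) (m + 1) h = (1 + D.M n m (h + 1) * D.C -
      vecMulVec ((φ D.del (-D.lam))⁻¹ • a1) (b1 ᵥ* D.C) -
      vecMulVec ((D.L.ea_E ξ D.del D.lam D.eps (-0))⁻¹ •
        (a2 - (φ D.del (-0) / φ D.del (-D.lam)) • a1))
        (b2 ᵥ* D.C - (φ D.eps (-D.lam) / φ D.del (-D.lam)) • (b1 ᵥ* D.C))).det := by
    rw [KPData.τ, mm, Matrix.sub_mul, Matrix.sub_mul, vecMulVec_mul, vecMulVec_mul, sub_vecMul,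
      smul_vecMul, add_sub_assoc, add_sub_assoc]
  have tB : D.τ n m (h + 1) = (1 + D.M n m (h + 1) * D.C).det := rfl
  rw [← t11, ← t12, ← t21, ← t22, ← tt, ← tB] at main
  rw [x1, x3]
  apply mul_left_cancel₀ (mul_ne_zero k11 hK)
  linear_combination (D.L.chi (-D.del) D.eps (ξ + D.del)) * main -
    D.τ (n + 1) m h * D.τ n (m + 1) (h + 1) * r2 - D.τ n (m + 1) h * D.τ (n + 1) m (h + 1) * r3
end
end

section
/- (Reduction to the lattice KdV equation.) Let w : ℤ³ → ℂ satisfy the lattice potential KP equation (w(n,m+1,h+1) − w(n+1,m,h+1))·(w(n,m,h+1) − w(n+1,m,h)) = (w(n,m+1,h+1) − w(n+1,m+1,h))·(w(n,m+1,h) − w(n+1,m,h)) for all (n,m,h) ∈ ℤ³, and suppose the dimensional-reduction constraint w(n+1,m,h+1) = w(n,m,h) holds for all (n,m,h) ∈ ℤ³. Then the quantity Q(n,m,h) := (w(n+1,m+1,h) − w(n,m,h))·(w(n,m+1,h) − w(n+1,m,h)) is invariant under the shift n → n+1, i.e. Q(n+1,m,h) = Q(n,m,h) for all (n,m,h) ∈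 ℤ³. -/
/-- Reduction to the lattice KdV equation: if `w : ℤ³ → ℂ` satisfies the lattice
potential KP equation and the dimensional-reduction constraint
`w(n+1,m,h+1) = w(n,m,h)`, then the quantity
`Q(n,m,h) = (w(n+1,m+1,h) − w(n,m,h))·(w(n,m+1,h) − w(n+1,m,h))`
is invariant under the shift `n → n+1`. -/
theorem lattice_KdV_reduction (w : ℤ → ℤ → ℤ → ℂ)
    (hKP : ∀ n m h : ℤ,
      (w n (m + 1) (h + 1) - w (n + 1) m (h + 1)) *
          (w n m (h + 1) - w (n + 1) m h) =
        (w n (m + 1) (h + 1) - w (n + 1) (m + 1) h) *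
          (w n (m + 1) h - w (n + 1) m h))
    (hred : ∀ n m h : ℤ, w (n + 1) m (h + 1) = w n m h) :
    ∀ n m h : ℤ,
      (w (n + 1 + 1) (m + 1) h - w (n + 1) m h) *
          (w (n + 1) (m + 1) h - w (n + 1 + 1) m h) =
        (w (n + 1) (m + 1) h - w n m h) * (w n (m + 1) h - w (n + 1) m h) := by
  intro n m h
  have H := hKP (n + 1) m h
  simp only [hred] at H
  linear_combination H
end
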